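/- arXiv:1711.00680 — 8 statements merged into one kernel-verified Lean document; each statement's English description precedes it below -/
import Mathlib

section
/- Let L be a nonempty subset with L ⊆ N ⊊ M ⊆ V. Then Σ_{∅ ≠ L' ⊆ L} λ_{L'}^M(x_{L'}) = Σ_{∅ ≠ L' ⊆ L} λ_{L'}^N(x_{L'}) holds for every x_L ∈ 𝔛_L if and only if λ_{L'}^M(x_{L'}) = λ_{L'}^N(x_{L'}) for every nonempty L' ⊆ L and every x_{L'} ∈ 𝔛_{L'}. -/
open Finset

variable {V : Type*} [Fintype V] [DecidableEq V]
variable {𝔛 : V → Type*} [∀ v, Fintype (𝔛 v)] [∀ v, DecidableEq (𝔛 v)]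
  [∀ v, Nonempty (𝔛 v)]

/-- The marginal `p_A` of a distribution `p` on the full table, evaluated at the
`A`-coordinates of `x`. -/
noncomputable def margin (p : (∀ v, 𝔛 v) → ℝ) (A : Finset V) (x : ∀ v, 𝔛 v) : ℝ :=
  ∑ y ∈ Finset.univ.filter (fun y : ∀ v, 𝔛 v => ∀ v ∈ A, y v = x v), p y

/-- `ν_L^M(x_L) = (1/|𝔛_{M∖L}|) Σ_{j ∈ 𝔛_M : j_L = x_L} log p_M(j)`, written with sums over
full configurations (for `L ⊆ M` the extra coordinates cancel against the normalization). -/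
noncomputable def nu (p : (∀ v, 𝔛 v) → ℝ) (L M : Finset V) (x : ∀ v, 𝔛 v) : ℝ :=
  (∏ v ∈ Lᶜ, (Fintype.card (𝔛 v) : ℝ))⁻¹ *
    ∑ j ∈ Finset.univ.filter (fun j : ∀ v, 𝔛 v => ∀ v ∈ L, j v = x v),
      Real.log (margin p M j)

/-- The marginal log-linear parameter `λ_L^M(x_L) = Σ_{L' ⊆ L} (−1)^{|L∖L'|} ν_{L'}^M(x_{L'})`. -/
noncomputable def mll (p : (∀ v, 𝔛 v) → ℝ) (L M : Finset V) (x : ∀ v, 𝔛 v) : ℝ :=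
  ∑ L' ∈ L.powerset, (-1 : ℝ) ^ ((L \ L').card) * nu p L' M x

theorem moebius_aux {W : Type*} [DecidableEq W] (L : Finset W) (g : Finset W → ℝ) :
    ∑ L' ∈ L.powerset, ∑ S ∈ L'.powerset, (-1 : ℝ) ^ ((L' \ S).card) * g S = g L := by
  rw [Finset.sum_comm' (t' := L.powerset) (s' := fun S => Finset.Icc S L)]
  · rw [Finset.sum_eq_single L]
    · simp
    · intro S hS hne
      rw [Finset.mem_powerset] at hS
      rw [← Finset.sum_mul, Finset.Icc_eq_image_powerset hS, Finset.sum_image]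
      · have h1 : ∀ T ∈ (L \ S).powerset, (-1 : ℝ) ^ (((S ∪ T) \ S).card) = (-1 : ℝ) ^ T.card := by
          intro T hT
          rw [Finset.mem_powerset] at hT
          congr 2
          ext v
          have := @hT v
          simp only [Finset.mem_sdiff, Finset.mem_union] at *
          tauto
        rw [Finset.sum_congr rfl h1]
        have h2 := Finset.sum_powerset_neg_one_pow_card (x := L \ S)
        have h3 : ¬ (L \ S = ∅) := fun h =>
          hne (Finset.Subset.antisymm hS (Finset.sdiff_eq_empty_iff_subset.1 h))
        rw [if_neg h3] at h2
        have h4 : (∑ T ∈ (L \ S).powerset, (-1 : ℝ) ^ T.card) = 0 := by exact_mod_cast h2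
        rw [h4, zero_mul]
      · intro T hT T' hT' h
        simp only [Finset.coe_powerset, Set.mem_preimage, Set.mem_powerset_iff, Finset.coe_subset,
          Finset.mem_coe, Finset.mem_powerset] at hT hT'
        ext v
        have h1 := @hT v
        have h2 := @hT' v
        have h3 := congrArg (fun U => v ∈ U) h
        simp only [Finset.mem_sdiff, Finset.mem_union, eq_iff_iff] at *
        tauto
    · simp
  · intro A S
    simp only [Finset.mem_powerset, Finset.mem_Icc, Finset.le_eq_subset]
    constructor
    · rintro ⟨h1, h2⟩
      exact ⟨⟨h2, h1⟩, h2.trans h1⟩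
    · rintro ⟨⟨h2, h1⟩, _⟩
      exact ⟨h1, h2⟩

theorem alt_aux {W : Type*} [DecidableEq W] (L : Finset W) (hL : L.Nonempty) :
    ∑ S ∈ L.powerset, (-1 : ℝ) ^ ((L \ S).card) = 0 := by
  have h0 : ∑ S ∈ L.powerset, (-1 : ℝ) ^ ((L \ S).card) = ∑ T ∈ L.powerset, (-1 : ℝ) ^ T.card := by
    refine Finset.sum_nbij' (fun S => L \ S) (fun S => L \ S) ?_ ?_ ?_ ?_ ?_ <;> intro S hS
    · simp
    · simp
    · simpa using hS
    · simpa using hS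
    · rfl
  have h2 := Finset.sum_powerset_neg_one_pow_card (x := L)
  rw [if_neg hL.ne_empty] at h2
  rw [h0]
  exact_mod_cast h2

theorem card_agree_aux {V : Type*} [Fintype V] [DecidableEq V] {𝔛 : V → Type*}
    [∀ v, Fintype (𝔛 v)] [∀ v, DecidableEq (𝔛 v)] (L : Finset V) (k : ∀ v, 𝔛 v) :
    ((Finset.univ.filter (fun j : ∀ v, 𝔛 v => ∀ v ∈ L, k v = j v)).card : ℝ) =
      ∏ v ∈ Lᶜ, (Fintype.card (𝔛 v) : ℝ) := by
  have h : Finset.univ.filter (fun j : ∀ v, 𝔛 v => ∀ v ∈ L, k v = j v) =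
      Fintype.piFinset (fun v => if v ∈ L then {k v} else Finset.univ) := by
    ext j
    simp only [Finset.mem_filter, Finset.mem_univ, true_and, Fintype.mem_piFinset]
    refine forall_congr' fun v => ?_
    by_cases hv : v ∈ L <;> simp [hv, eq_comm]
  rw [h, Fintype.card_piFinset, Nat.cast_prod, ← Finset.prod_mul_prod_compl L]
  rw [Finset.prod_eq_one (s := L), one_mul]
  · refine Finset.prod_congr rfl fun v hv => ?_
    rw [if_neg (Finset.mem_compl.1 hv), Finset.card_univ]
  · intro v hv
    simp [hv]

theorem prod_ne_aux {V : Type*} [Fintype V] [DecidableEq V] {𝔛 : V → Type*}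
    [∀ v, Fintype (𝔛 v)] [∀ v, Nonempty (𝔛 v)] (L : Finset V) :
    (∏ v ∈ Lᶜ, (Fintype.card (𝔛 v) : ℝ)) ≠ 0 :=
  Finset.prod_ne_zero_iff.2 fun v _ => Nat.cast_ne_zero.2 Fintype.card_ne_zero

theorem nu_tower_aux {V : Type*} [Fintype V] [DecidableEq V] {𝔛 : V → Type*}
    [∀ v, Fintype (𝔛 v)] [∀ v, DecidableEq (𝔛 v)] [∀ v, Nonempty (𝔛 v)]
    (p : (∀ v, 𝔛 v) → ℝ) (S L M : Finset V) (hS : S ⊆ L) (x : ∀ v, 𝔛 v) :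
    nu p S M x = (∏ v ∈ Sᶜ, (Fintype.card (𝔛 v) : ℝ))⁻¹ *
      ∑ j ∈ Finset.univ.filter (fun j : ∀ v, 𝔛 v => ∀ v ∈ S, j v = x v), nu p L M j := by
  unfold nu
  congr 1
  rw [← Finset.mul_sum, Finset.sum_comm'
    (t' := Finset.univ.filter (fun k : ∀ v, 𝔛 v => ∀ v ∈ S, k v = x v))
    (s' := fun k => Finset.univ.filter (fun j : ∀ v, 𝔛 v => ∀ v ∈ L, k v = j v))]
  · simp only [Finset.sum_const, nsmul_eq_mul, card_agree_aux]
    rw [← Finset.mul_sum, inv_mul_cancel_left₀ (prod_ne_aux L)]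
  · intro j k
    simp only [Finset.mem_filter, Finset.mem_univ, true_and]
    constructor
    · rintro ⟨h1, h2⟩
      exact ⟨h2, fun v hv => (h2 v (hS hv)).trans (h1 v hv)⟩
    · rintro ⟨h1, h2⟩
      exact ⟨fun v hv => (h1 v (hS hv)).symm.trans (h2 v hv), h1⟩

theorem sum_mll_aux {V : Type*} [Fintype V] [DecidableEq V] {𝔛 : V → Type*}
    [∀ v, Fintype (𝔛 v)] [∀ v, DecidableEq (𝔛 v)] [∀ v, Nonempty (𝔛 v)]
    (p : (∀ v, 𝔛 v) → ℝ) (L M : Finset V) (x : ∀ v, 𝔛 v) :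
    ∑ L' ∈ L.powerset.filter (fun S => S.Nonempty), mll p L' M x = nu p L M x - nu p ∅ M x := by
  have h1 : ∑ L' ∈ L.powerset, mll p L' M x = nu p L M x :=
    moebius_aux L (fun S => nu p S M x)
  have h2 := Finset.sum_filter_add_sum_filter_not L.powerset (fun S => S.Nonempty)
    (fun S => mll p S M x)
  have h3 : L.powerset.filter (fun S => ¬ S.Nonempty) = {∅} := by
    ext S
    simp only [Finset.mem_filter, Finset.mem_powerset, Finset.not_nonempty_iff_eq_empty,
      Finset.mem_singleton]
    constructor
    · exact fun h => h.2
    · rintro rfl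
      simp
  have h4 : mll p ∅ M x = nu p ∅ M x := by simp [mll]
  rw [h3, Finset.sum_singleton, h1, h4] at h2
  linarith

theorem stmt1 (p : (∀ v, 𝔛 v) → ℝ) (hp : ∀ x, 0 < p x) (hsum : ∑ x, p x = 1)
    (L N M : Finset V) (hL : L.Nonempty) (hLN : L ⊆ N) (hNM : N ⊂ M) :
    (∀ x : ∀ v, 𝔛 v,
        ∑ L' ∈ L.powerset.filter (fun S => S.Nonempty), mll p L' M x =
        ∑ L' ∈ L.powerset.filter (fun S => S.Nonempty), mll p L' N x) ↔
    (∀ L' ⊆ L, L'.Nonempty → ∀ x : ∀ v, 𝔛 v, mll p L' M x = mll p L' N x) := by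
  constructor
  · intro h L' hL' hne x
    have hd : ∀ y, nu p L M y - nu p L N y = nu p ∅ M x - nu p ∅ N x := by
      intro y
      have h1 := h y
      rw [sum_mll_aux, sum_mll_aux] at h1
      have hM : nu p ∅ M y = nu p ∅ M x := by simp [nu]
      have hN : nu p ∅ N y = nu p ∅ N x := by simp [nu]
      linarith
    have hd' : ∀ S ⊆ L, nu p S M x - nu p S N x = nu p ∅ M x - nu p ∅ N x := by
      intro S hS
      rw [nu_tower_aux p S L M hS x, nu_tower_aux p S L N hS x, ← mul_sub,
        ← Finset.sum_sub_distrib, Finset.sum_congr rfl (fun y _ => hd y), Finset.sum_const,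
        nsmul_eq_mul]
      have hc := card_agree_aux S x
      simp only [eq_comm (a := x _)] at hc
      rw [hc, inv_mul_cancel_left₀ (prod_ne_aux S)]
    rw [← sub_eq_zero]
    unfold mll
    rw [← Finset.sum_sub_distrib]
    have h5 : ∀ S ∈ L'.powerset, (-1 : ℝ) ^ ((L' \ S).card) * nu p S M x -
        (-1 : ℝ) ^ ((L' \ S).card) * nu p S N x =
        (-1 : ℝ) ^ ((L' \ S).card) * (nu p ∅ M x - nu p ∅ N x) := by
      intro S hS
      rw [← mul_sub, hd' S ((Finset.mem_powerset.1 hS).trans hL')]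
    rw [Finset.sum_congr rfl h5, ← Finset.sum_mul, alt_aux L' hne, zero_mul]
  · intro h x
    refine Finset.sum_congr rfl fun S hS => ?_
    rw [Finset.mem_filter, Finset.mem_powerset] at hS
    exact h S hS.1 hS.2 x
end

section
/- Fix M ⊆ V and let (μ_L)_{L ⊆ M} be a family of real-valued functions, μ_L : 𝔛_L → ℝ (with μ_∅ a constant), satisfying the identifiability constraints Σ_{x_v ∈ 𝔛_v} μ_L(x_v, x_{L∖{v}}) = 0 for every nonempty L ⊆ M, every v ∈ L, and every fixed x_{L∖{v}}. Then log p_M(x_M) = Σ_{L ⊆ M} μ_L(x_L) holds for all x_M ∈ 𝔛_M if and only if ν_A^M(x_A) = Σ_{L ⊆ A} μ_L(x_L) holds for every A ⊆ M and every x_A ∈ 𝔛_A. -/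
open Finset

variable {V : Type*} [Fintype V] [DecidableEq V]
variable {𝔛 : V → Type*} [∀ v, Fintype (𝔛 v)] [∀ v, DecidableEq (𝔛 v)]
  [∀ v, Nonempty (𝔛 v)]

theorem card_agree (A : Finset V) (x : ∀ v, 𝔛 v) :
    ((Finset.univ.filter (fun y : ∀ v, 𝔛 v => ∀ v ∈ A, y v = x v)).card : ℝ) =
      ∏ v ∈ Aᶜ, (Fintype.card (𝔛 v) : ℝ) := by
  have h : (Finset.univ.filter (fun y : ∀ v, 𝔛 v => ∀ v ∈ A, y v = x v)) =
      Fintype.piFinset (fun v => if v ∈ A then {x v} else Finset.univ) := by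
    ext y
    simp only [Finset.mem_filter, Finset.mem_univ, true_and, Fintype.mem_piFinset]
    refine forall_congr' fun v => ?_
    by_cases hv : v ∈ A <;> simp [hv]
  rw [h, Fintype.card_piFinset]
  push_cast
  rw [← Finset.prod_mul_prod_compl A]
  rw [Finset.prod_eq_one, one_mul]
  · refine Finset.prod_congr rfl fun v hv => ?_
    rw [Finset.mem_compl] at hv
    simp [hv]
  · intro v hv
    simp [hv]

theorem sum_agree_zero (A : Finset V) (x : ∀ v, 𝔛 v) (f : (∀ v, 𝔛 v) → ℝ) (v : V)
    (hv : v ∉ A) (hf : ∀ x : ∀ u, 𝔛 u, ∑ a : 𝔛 v, f (Function.update x v a) = 0) :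
    ∑ j ∈ Finset.univ.filter (fun y : ∀ v, 𝔛 v => ∀ v ∈ A, y v = x v), f j = 0 := by
  set F := Finset.univ.filter (fun y : ∀ v, 𝔛 v => ∀ v ∈ A, y v = x v) with hF
  have h1 : ∑ q ∈ F ×ˢ (Finset.univ : Finset (𝔛 v)), f (Function.update q.1 v q.2) = 0 := by
    rw [Finset.sum_product]
    exact Finset.sum_eq_zero fun j _ => hf j
  have hm : ∀ q ∈ F ×ˢ (Finset.univ : Finset (𝔛 v)),
      (Function.update q.1 v q.2, q.1 v) ∈ F ×ˢ (Finset.univ : Finset (𝔛 v)) := by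
    intro q hq
    simp only [hF, Finset.mem_product, Finset.mem_filter, Finset.mem_univ, true_and,
      and_true] at hq ⊢
    intro u hu
    have : u ≠ v := fun e => hv (e ▸ hu)
    rw [Function.update_of_ne this]
    exact hq u hu
  have h2 : ∑ q ∈ F ×ˢ (Finset.univ : Finset (𝔛 v)), f (Function.update q.1 v q.2) =
      ∑ q ∈ F ×ˢ (Finset.univ : Finset (𝔛 v)), f q.1 := by
    refine Finset.sum_nbij' (fun q => (Function.update q.1 v q.2, q.1 v))
      (fun q => (Function.update q.1 v q.2, q.1 v)) hm hm ?_ ?_ ?_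
    · intro q _; simp
    · intro q _; simp
    · intro q _; rfl
  rw [h1, Finset.sum_product] at h2
  simp only [Finset.sum_const, nsmul_eq_mul, Finset.card_univ] at h2
  rw [← Finset.mul_sum] at h2
  have hc : (Fintype.card (𝔛 v) : ℝ) ≠ 0 := by
    exact_mod_cast Fintype.card_ne_zero
  exact (mul_eq_zero.mp h2.symm).resolve_left hc

theorem margin_congr (p : (∀ v, 𝔛 v) → ℝ) (M : Finset V) (x y : ∀ v, 𝔛 v)
    (h : ∀ v ∈ M, x v = y v) : margin p M x = margin p M y := by
  unfold margin
  congr 1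
  ext z
  simp only [Finset.mem_filter, Finset.mem_univ, true_and]
  refine forall₂_congr fun v hv => ?_
  rw [h v hv]

theorem stmt2 (p : (∀ v, 𝔛 v) → ℝ) (hp : ∀ x, 0 < p x) (hsum : ∑ x, p x = 1)
    (M : Finset V) (μ : Finset V → (∀ v, 𝔛 v) → ℝ)
    (hloc : ∀ L ⊆ M, ∀ x y : ∀ v, 𝔛 v, (∀ v ∈ L, x v = y v) → μ L x = μ L y)
    (hid : ∀ L ⊆ M, ∀ v ∈ L, ∀ x : ∀ u, 𝔛 u,
      ∑ a : 𝔛 v, μ L (Function.update x v a) = 0) :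
    (∀ x : ∀ v, 𝔛 v, Real.log (margin p M x) = ∑ L ∈ M.powerset, μ L x) ↔
    (∀ A ⊆ M, ∀ x : ∀ v, 𝔛 v, nu p A M x = ∑ L ∈ A.powerset, μ L x) := by
  have hc : ∀ A : Finset V, (∏ v ∈ Aᶜ, (Fintype.card (𝔛 v) : ℝ)) ≠ 0 := by
    intro A
    refine Finset.prod_ne_zero_iff.mpr fun v _ => ?_
    exact_mod_cast Fintype.card_ne_zero
  constructor
  · intro h A hA x
    unfold nu
    rw [inv_mul_eq_iff_eq_mul₀ (hc A)]
    simp only [h]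
    rw [Finset.sum_comm, Finset.mul_sum]
    rw [← Finset.sum_subset (Finset.powerset_mono.mpr hA)]
    · refine Finset.sum_congr rfl fun L hL => ?_
      rw [Finset.mem_powerset] at hL
      rw [← card_agree A x, ← nsmul_eq_mul]
      refine Finset.sum_eq_card_nsmul fun j hj => ?_
      refine hloc L (hL.trans hA) _ _ fun v hv => ?_
      exact (Finset.mem_filter.mp hj).2 v (hL hv)
    · intro L hL hLA
      rw [Finset.mem_powerset] at hL hLA
      obtain ⟨v, hvL, hvA⟩ := Finset.not_subset.mp hLA
      exact sum_agree_zero A x (μ L) v hvA (hid L hL v hvL)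
  · intro h x
    rw [← h M subset_rfl x]
    unfold nu
    rw [eq_inv_mul_iff_mul_eq₀ (hc M), ← card_agree M x, ← nsmul_eq_mul]
    refine (Finset.sum_eq_card_nsmul fun j hj => ?_).symm
    rw [margin_congr p M j x (Finset.mem_filter.mp hj).2]
end

section
/- Let A, B, C be pairwise disjoint subsets of V with A and B nonempty (C possibly empty). Then X_A ⟂ X_B | X_C holds if and only if λ_{A'∪B'∪C'}^{A∪B∪C}(x) = 0 for every nonempty A' ⊆ A, every nonempty B' ⊆ B, every C' ⊆ C, and every x ∈ 𝔛_{A'∪B'∪C'}. -/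
open Finset

variable {V : Type*} [Fintype V] [DecidableEq V]
variable {𝔛 : V → Type*} [∀ v, Fintype (𝔛 v)] [∀ v, DecidableEq (𝔛 v)]
  [∀ v, Nonempty (𝔛 v)]

/-- `X_A ⟂ X_B | X_C`: `p_{A∪B∪C}·p_C = p_{A∪C}·p_{B∪C}` pointwise. -/
def CondIndep (p : (∀ v, 𝔛 v) → ℝ) (A B C : Finset V) : Prop :=
  ∀ x : ∀ v, 𝔛 v,
    margin p (A ∪ B ∪ C) x * margin p C x = margin p (A ∪ C) x * margin p (B ∪ C) x

noncomputable def avg (S : Finset V) (f : (∀ v, 𝔛 v) → ℝ) (x : ∀ v, 𝔛 v) : ℝ :=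
  (∏ v, (Fintype.card (𝔛 v) : ℝ))⁻¹ * ∑ y : ∀ v, 𝔛 v, f (S.piecewise x y)

lemma prodcard_pos (S : Finset V) : 0 < ∏ v ∈ S, (Fintype.card (𝔛 v) : ℝ) :=
  Finset.prod_pos fun v _ => by exact_mod_cast Fintype.card_pos

lemma card_tot : (∏ v, (Fintype.card (𝔛 v) : ℝ)) = (Fintype.card (∀ v, 𝔛 v) : ℝ) := by
  rw [Fintype.card_pi]; push_cast; rfl

lemma fiber_sum (S : Finset V) (f : (∀ v, 𝔛 v) → ℝ) (x : ∀ v, 𝔛 v) :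
    ∑ y : ∀ v, 𝔛 v, f (S.piecewise x y) = (∏ v ∈ S, (Fintype.card (𝔛 v) : ℝ)) *
      ∑ y ∈ Finset.univ.filter (fun y : ∀ v, 𝔛 v => ∀ v ∈ S, y v = x v), f y := by
  rw [← Finset.sum_fiberwise_of_maps_to (s := Finset.univ)
    (t := Finset.univ.filter (fun y : ∀ v, 𝔛 v => ∀ v ∈ S, y v = x v))
    (g := fun y => S.piecewise x y), Finset.mul_sum]
  · refine Finset.sum_congr rfl fun w hw => ?_
    have hw' : ∀ v ∈ S, w v = x v := by simpa using hw
    have h1 : ∑ y ∈ Finset.univ.filter (fun y : ∀ v, 𝔛 v => S.piecewise x y = w),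
        f (S.piecewise x y)
        = ∑ y ∈ Finset.univ.filter (fun y : ∀ v, 𝔛 v => S.piecewise x y = w), f w := by
      refine Finset.sum_congr rfl fun y hy => ?_
      rw [(Finset.mem_filter.1 hy).2]
    have h2 : Finset.univ.filter (fun y : ∀ v, 𝔛 v => S.piecewise x y = w)
        = Fintype.piFinset (fun v => if v ∈ S then Finset.univ else {w v}) := by
      ext y
      simp only [Finset.mem_filter, Finset.mem_univ, true_and, Fintype.mem_piFinset]
      constructor
      · intro h v
        by_cases hv : v ∈ S
        · simp [hv]
        · simp [hv, ← h]
      · intro h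
        funext v
        by_cases hv : v ∈ S
        · simp [hv, hw' v hv]
        · simpa [hv] using h v
    rw [h1, h2, Finset.sum_const, Fintype.card_piFinset, nsmul_eq_mul]
    congr 1
    push_cast
    rw [← Finset.prod_subset (Finset.subset_univ S)]
    · exact Finset.prod_congr rfl fun v hv => by simp [hv]
    · intro v _ hv
      simp [hv]
  · intro y _
    simp +contextual

lemma avg_eq (S : Finset V) (f : (∀ v, 𝔛 v) → ℝ) (x : ∀ v, 𝔛 v) :
    avg S f x = (∏ v ∈ Sᶜ, (Fintype.card (𝔛 v) : ℝ))⁻¹ *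
      ∑ y ∈ Finset.univ.filter (fun y : ∀ v, 𝔛 v => ∀ v ∈ S, y v = x v), f y := by
  rw [avg, fiber_sum, ← Finset.prod_mul_prod_compl S]
  have h1 := (prodcard_pos (𝔛 := 𝔛) S).ne'
  have h2 := (prodcard_pos (𝔛 := 𝔛) Sᶜ).ne'
  field_simp

lemma margin_eq (p : (∀ v, 𝔛 v) → ℝ) (S : Finset V) (x : ∀ v, 𝔛 v) :
    margin p S x = (∏ v ∈ Sᶜ, (Fintype.card (𝔛 v) : ℝ)) * avg S p x := by
  rw [avg_eq, margin, mul_inv_cancel_left₀ (prodcard_pos (𝔛 := 𝔛) Sᶜ).ne']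

noncomputable def ML (f : (∀ v, 𝔛 v) → ℝ) (L : Finset V) (x : ∀ v, 𝔛 v) : ℝ :=
  ∑ L' ∈ L.powerset, (-1 : ℝ) ^ ((L \ L').card) * avg L' f x

lemma mll_eq (p : (∀ v, 𝔛 v) → ℝ) (L M : Finset V) (x : ∀ v, 𝔛 v) :
    mll p L M x = ML (fun j => Real.log (margin p M j)) L x := by
  simp only [mll, ML, nu, avg_eq]

lemma avg_congr (S T : Finset V) (f : (∀ v, 𝔛 v) → ℝ) (D : Finset V) (hf : DependsOn f (D : Set V))
    (h : ∀ v ∈ D, v ∈ S ↔ v ∈ T) (x : ∀ v, 𝔛 v) : avg S f x = avg T f x := by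
  unfold avg
  congr 1
  refine Finset.sum_congr rfl fun y _ => hf fun v hv => ?_
  have := h v hv
  by_cases h1 : v ∈ S
  · simp [h1, this.1 h1]
  · have h3 : v ∉ T := fun h2 => h1 (this.2 h2)
    simp [h1, h3]

lemma avg_depends (S : Finset V) (f : (∀ v, 𝔛 v) → ℝ) : DependsOn (avg S f) (S : Set V) := by
  intro x x' h
  unfold avg
  congr 1
  refine Finset.sum_congr rfl fun y _ => congrArg f ?_
  funext v
  by_cases h1 : v ∈ S
  · simp [h1, h v h1]
  · simp [h1]

lemma ML_depends (L : Finset V) (f : (∀ v, 𝔛 v) → ℝ) : DependsOn (ML f L) (L : Set V) := by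
  intro x x' h
  unfold ML
  refine Finset.sum_congr rfl fun L' hL => ?_
  rw [avg_depends L' f fun v hv => h v (Finset.mem_powerset.1 hL hv)]

lemma mobius_step {a : V} {L : Finset V} (ha : a ∉ L) (g : Finset V → ℝ) :
    ∑ L' ∈ (insert a L).powerset, (-1 : ℝ) ^ ((insert a L \ L').card) * g L'
    = - ∑ L' ∈ L.powerset, (-1 : ℝ) ^ ((L \ L').card) * g L'
      + ∑ L' ∈ L.powerset, (-1 : ℝ) ^ ((L \ L').card) * g (insert a L') := by
  rw [Finset.sum_powerset_insert ha, ← Finset.sum_neg_distrib]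
  congr 1
  · refine Finset.sum_congr rfl fun L' hL => ?_
    have h1 : a ∉ L' := fun h => ha (Finset.mem_powerset.1 hL h)
    rw [Finset.insert_sdiff_of_notMem _ h1, Finset.card_insert_of_notMem (by simp [ha]), pow_succ]
    ring
  · refine Finset.sum_congr rfl fun L' hL => ?_
    congr 3
    ext v
    simp only [Finset.mem_sdiff, Finset.mem_insert]
    grind

lemma mobius (S : Finset V) : ∀ g : Finset V → ℝ,
    ∑ L ∈ S.powerset, ∑ L' ∈ L.powerset, (-1 : ℝ) ^ ((L \ L').card) * g L' = g S := by
  induction S using Finset.induction_on with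
  | empty => intro g; simp
  | insert a S ha ih =>
    intro g
    rw [Finset.sum_powerset_insert ha]
    have : ∀ L ∈ S.powerset, _ := fun L hL =>
      mobius_step (fun h => ha (Finset.mem_powerset.1 hL h)) g
    rw [Finset.sum_congr rfl this, Finset.sum_add_distrib, Finset.sum_neg_distrib,
      ih fun L => g (insert a L)]
    ring

lemma ML_zero (f : (∀ v, 𝔛 v) → ℝ) (D L : Finset V) (hf : DependsOn f (D : Set V))
    {a : V} (haL : a ∈ L) (ha : a ∉ D) (x : ∀ v, 𝔛 v) : ML f L x = 0 := by
  unfold ML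
  rw [← Finset.insert_erase haL, mobius_step (Finset.notMem_erase a L) (fun L' => avg L' f x)]
  have : ∀ L', avg (insert a L') f x = avg L' f x := fun L' =>
    avg_congr _ _ f D hf (fun v hv => by
      have : v ≠ a := fun h => ha (h ▸ hv)
      simp [this]) x
  simp [this]

lemma avg_add (S : Finset V) (f g : (∀ v, 𝔛 v) → ℝ) (x : ∀ v, 𝔛 v) :
    avg S (fun y => f y + g y) x = avg S f x + avg S g x := by
  simp only [avg, Finset.sum_add_distrib, mul_add]

lemma ML_add (f g : (∀ v, 𝔛 v) → ℝ) (L : Finset V) (x : ∀ v, 𝔛 v) :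
    ML (fun y => f y + g y) L x = ML f L x + ML g L x := by
  simp only [ML, avg_add, mul_add, Finset.sum_add_distrib]

lemma ML_sum (f : (∀ v, 𝔛 v) → ℝ) (x : ∀ v, 𝔛 v) : ∑ L : Finset V, ML f L x = f x := by
  have h := mobius (Finset.univ : Finset V) (fun L => avg L f x)
  rw [Finset.powerset_univ] at h
  unfold ML
  have hN := (prodcard_pos (𝔛 := 𝔛) Finset.univ).ne'
  rw [h, avg]
  simp only [Finset.piecewise_univ, Finset.sum_const, nsmul_eq_mul, Finset.card_univ]
  rw [← card_tot, inv_mul_cancel_left₀ hN]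

/-- swapping coordinates in `T` -/
def swapE (T : Finset V) : ((∀ v, 𝔛 v) × (∀ v, 𝔛 v)) ≃ ((∀ v, 𝔛 v) × (∀ v, 𝔛 v)) where
  toFun q := (T.piecewise q.1 q.2, T.piecewise q.2 q.1)
  invFun q := (T.piecewise q.1 q.2, T.piecewise q.2 q.1)
  left_inv q := by
    ext v <;> by_cases h : v ∈ T <;> simp [h]
  right_inv q := by
    ext v <;> by_cases h : v ∈ T <;> simp [h]

lemma swap_sum (T : Finset V) (f : (∀ v, 𝔛 v) → ℝ) :
    ∑ y : ∀ v, 𝔛 v, ∑ z : ∀ v, 𝔛 v, f (T.piecewise y z)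
      = (∏ v, (Fintype.card (𝔛 v) : ℝ)) * ∑ y : ∀ v, 𝔛 v, f y := by
  rw [← Fintype.sum_prod_type' (f := fun y z => f (T.piecewise y z))]
  have := Equiv.sum_comp (swapE (𝔛 := 𝔛) T) (fun q => f q.1)
  simp only [swapE, Equiv.coe_fn_mk] at this
  rw [this, Fintype.sum_prod_type, card_tot]
  simp [Finset.mul_sum]

lemma avg_avg (S T : Finset V) (hST : S ⊆ T) (f : (∀ v, 𝔛 v) → ℝ) (x : ∀ v, 𝔛 v) :
    avg S (avg T f) x = avg S f x := by
  have hN := (prodcard_pos (𝔛 := 𝔛) Finset.univ).ne'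
  have h := swap_sum T (fun y => f (S.piecewise x y))
  have e : ∀ y z : ∀ v, 𝔛 v, S.piecewise x (T.piecewise y z)
      = T.piecewise (S.piecewise x y) z := by
    intro y z
    funext v
    by_cases h1 : v ∈ S
    · simp [h1, hST h1]
    · by_cases h2 : v ∈ T <;> simp [h1, h2]
  simp only [e] at h
  simp only [avg, ← Finset.mul_sum]
  rw [h]
  field_simp

lemma avg_mul_left (S : Finset V) (f g : (∀ v, 𝔛 v) → ℝ) (hf : DependsOn f (S : Set V))
    (x : ∀ v, 𝔛 v) : avg S (fun y => f y * g y) x = f x * avg S g x := by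
  have : ∀ y, f (S.piecewise x y) = f x := fun y => hf fun v hv => by
    have : v ∈ S := hv
    simp [this]
  simp only [avg, this, ← Finset.mul_sum]
  ring

lemma avg_indep (A B C : Finset V) (hAB : Disjoint A B) (hBC : Disjoint B C)
    (G H : (∀ v, 𝔛 v) → ℝ)
    (hG : DependsOn G ((B ∪ C : Finset V) : Set V)) (hH : DependsOn H ((A ∪ C : Finset V) : Set V))
    (x : ∀ v, 𝔛 v) : avg C (fun y => G y * H y) x = avg C G x * avg C H x := by
  have hN := (prodcard_pos (𝔛 := 𝔛) Finset.univ).ne'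
  have h := swap_sum B (fun y => G (C.piecewise x y) * H (C.piecewise x y))
  have e1 : ∀ y z : ∀ v, 𝔛 v, G (C.piecewise x (B.piecewise y z)) = G (C.piecewise x y) := by
    intro y z
    refine hG fun v hv => ?_
    by_cases h1 : v ∈ C
    · simp [h1]
    · have : v ∈ B := by simpa [h1] using hv
      simp [h1, this]
  have e2 : ∀ y z : ∀ v, 𝔛 v, H (C.piecewise x (B.piecewise y z)) = H (C.piecewise x z) := by
    intro y z
    refine hH fun v hv => ?_
    by_cases h1 : v ∈ C
    · simp [h1]
    · have : v ∈ A := by simpa [h1] using hv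
      simp [h1, Finset.disjoint_left.1 hAB this]
  simp only [e1, e2, ← Finset.mul_sum, ← Finset.sum_mul] at h
  simp only [avg]
  rw [mul_mul_mul_comm, h]
  field_simp

lemma margin_depends (p : (∀ v, 𝔛 v) → ℝ) (S : Finset V) :
    DependsOn (margin p S) (S : Set V) := by
  intro x y h
  rw [margin_eq, margin_eq, avg_depends S p h]

lemma margin_pos (p : (∀ v, 𝔛 v) → ℝ) (hp : ∀ x, 0 < p x) (S : Finset V) (x : ∀ v, 𝔛 v) :
    0 < margin p S x :=
  Finset.sum_pos (fun y _ => hp y) ⟨x, by simp⟩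

lemma prodcard_identity (A B C : Finset V) (hAB : Disjoint A B) (hAC : Disjoint A C)
    (hBC : Disjoint B C) :
    (∏ v ∈ (A ∪ B ∪ C)ᶜ, (Fintype.card (𝔛 v) : ℝ)) * ∏ v ∈ Cᶜ, (Fintype.card (𝔛 v) : ℝ)
    = (∏ v ∈ (A ∪ C)ᶜ, (Fintype.card (𝔛 v) : ℝ)) * ∏ v ∈ (B ∪ C)ᶜ, (Fintype.card (𝔛 v) : ℝ) := by
  have h1 : (A ∪ C)ᶜ = (A ∪ B ∪ C)ᶜ ∪ B := by
    ext v
    have := @Finset.disjoint_left _ A B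
    have := @Finset.disjoint_left _ B C
    simp only [Finset.mem_compl, Finset.mem_union]
    grind
  have h2 : Cᶜ = (B ∪ C)ᶜ ∪ B := by
    ext v
    have := @Finset.disjoint_left _ B C
    simp only [Finset.mem_compl, Finset.mem_union]
    grind
  rw [h1, h2, Finset.prod_union, Finset.prod_union]
  · ring
  · rw [Finset.disjoint_left]; intro v; simp; tauto
  · rw [Finset.disjoint_left]; intro v; simp; tauto

lemma condIndep_of_factor (p : (∀ v, 𝔛 v) → ℝ)
    (A B C : Finset V) (hAB : Disjoint A B) (hAC : Disjoint A C) (hBC : Disjoint B C)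
    (G H : (∀ v, 𝔛 v) → ℝ)
    (hG : DependsOn G ((B ∪ C : Finset V) : Set V)) (hH : DependsOn H ((A ∪ C : Finset V) : Set V))
    (hGH : ∀ x, avg (A ∪ B ∪ C) p x = G x * H x) : CondIndep p A B C := by
  intro x
  have hq : avg (A ∪ B ∪ C) p = fun x => G x * H x := funext hGH
  have hq' : avg (A ∪ B ∪ C) p = fun x => H x * G x := by
    rw [hq]; funext x; ring
  have hC : avg C p x = avg C G x * avg C H x := by
    rw [← avg_avg C (A ∪ B ∪ C) (by grind), hq, avg_indep A B C hAB hBC G H hG hH]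
  have hACe : avg (A ∪ C) p x = H x * avg C G x := by
    rw [← avg_avg (A ∪ C) (A ∪ B ∪ C) (by grind), hq', avg_mul_left _ _ _ hH]
    congr 1
    refine avg_congr _ _ G _ hG (fun v hv => ?_) x
    have := @Finset.disjoint_left _ A B
    grind
  have hBCe : avg (B ∪ C) p x = G x * avg C H x := by
    rw [← avg_avg (B ∪ C) (A ∪ B ∪ C) (by grind), hq, avg_mul_left _ _ _ hG]
    congr 1
    refine avg_congr _ _ H _ hH (fun v hv => ?_) x
    have := @Finset.disjoint_left _ A B
    grind
  rw [margin_eq, margin_eq, margin_eq, margin_eq, hGH, hC, hACe, hBCe]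
  linear_combination (G x * H x * avg C G x * avg C H x) *
    prodcard_identity (𝔛 := 𝔛) A B C hAB hAC hBC

theorem stmt3 (p : (∀ v, 𝔛 v) → ℝ) (hp : ∀ x, 0 < p x) (hsum : ∑ x, p x = 1)
    (A B C : Finset V) (hA : A.Nonempty) (hB : B.Nonempty)
    (hAB : Disjoint A B) (hAC : Disjoint A C) (hBC : Disjoint B C) :
    CondIndep p A B C ↔
    (∀ A' ⊆ A, A'.Nonempty → ∀ B' ⊆ B, B'.Nonempty → ∀ C' ⊆ C, ∀ x : ∀ v, 𝔛 v,
      mll p (A' ∪ B' ∪ C') (A ∪ B ∪ C) x = 0) := by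
  constructor
  · intro h A' hA' hA0 B' hB' hB0 C' hC' x
    obtain ⟨a, ha⟩ := hA0
    obtain ⟨b, hb⟩ := hB0
    have hf : (fun j => Real.log (margin p (A ∪ B ∪ C) j)) =
        fun j => Real.log (margin p (A ∪ C) j) +
          (Real.log (margin p (B ∪ C) j) - Real.log (margin p C j)) := by
      funext j
      have h1 := congrArg Real.log (h j)
      rw [Real.log_mul (margin_pos p hp _ _).ne' (margin_pos p hp _ _).ne',
        Real.log_mul (margin_pos p hp _ _).ne' (margin_pos p hp _ _).ne'] at h1
      linarith
    have d1 : DependsOn (fun j => Real.log (margin p (A ∪ C) j)) ((A ∪ C : Finset V) : Set V) :=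
      fun x y hxy => by simp only [margin_depends p (A ∪ C) hxy]
    have d2 : DependsOn (fun j => Real.log (margin p (B ∪ C) j) - Real.log (margin p C j))
        ((B ∪ C : Finset V) : Set V) := by
      intro x y hxy
      have : margin p C x = margin p C y :=
        margin_depends p C fun v hv => hxy v (by
          have : v ∈ C := hv
          simp [this])
      simp only [margin_depends p (B ∪ C) hxy, this]
    rw [mll_eq, hf, ML_add, ML_zero _ _ _ d1 (a := b), ML_zero _ _ _ d2 (a := a), add_zero]
    · simp [ha]
    · have h1 := Finset.disjoint_left.1 hAB (hA' ha)
      have h2 := Finset.disjoint_left.1 hAC (hA' ha)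
      simp [h1, h2]
    · simp [hb]
    · have h1 := Finset.disjoint_right.1 hAB (hB' hb)
      have h2 := Finset.disjoint_left.1 hBC (hB' hb)
      simp [h1, h2]
  · intro h
    set f : (∀ v, 𝔛 v) → ℝ := fun j => Real.log (margin p (A ∪ B ∪ C) j) with hf
    have hfd : DependsOn f ((A ∪ B ∪ C : Finset V) : Set V) :=
      fun x y hxy => by simp only [hf, margin_depends p (A ∪ B ∪ C) hxy]
    have hz : ∀ L : Finset V, ¬ Disjoint L A → ¬ Disjoint L B → ∀ x, ML f L x = 0 := by
      intro L h1 h2 x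
      by_cases hL : L ⊆ A ∪ B ∪ C
      · have e : L = (L ∩ A) ∪ (L ∩ B) ∪ (L ∩ C) := by
          rw [← Finset.inter_union_distrib_left, ← Finset.inter_union_distrib_left,
            Finset.inter_eq_left.2 hL]
        rw [e, ← mll_eq]
        exact h _ Finset.inter_subset_right (Finset.not_disjoint_iff_nonempty_inter.1 h1)
          _ Finset.inter_subset_right (Finset.not_disjoint_iff_nonempty_inter.1 h2)
          _ Finset.inter_subset_right x
      · obtain ⟨a, ha, ha'⟩ := Finset.not_subset.1 hL
        exact ML_zero f _ L hfd ha ha' x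
    -- terms with support disjoint from `T` depend only on the rest
    have hd : ∀ L T R : Finset V, Disjoint L T → A ∪ B ∪ C ⊆ T ∪ R →
        DependsOn (ML f L) (R : Set V) := by
      intro L T R h1 h2 x y hxy
      by_cases hL : L ⊆ A ∪ B ∪ C
      · refine ML_depends L f fun v hv => hxy v ?_
        have h3 := h2 (hL hv)
        have h4 := Finset.disjoint_left.1 h1 hv
        simpa [h4] using h3
      · obtain ⟨a, ha, ha'⟩ := Finset.not_subset.1 hL
        rw [ML_zero f _ L hfd ha ha' x, ML_zero f _ L hfd ha ha' y]
    let K : ℝ := (∏ v ∈ (A ∪ B ∪ C)ᶜ, (Fintype.card (𝔛 v) : ℝ))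
    have hK : 0 < K := prodcard_pos (𝔛 := 𝔛) _
    refine condIndep_of_factor p A B C hAB hAC hBC
      (fun x => K⁻¹ * Real.exp (∑ L ∈ Finset.univ.filter (fun L => Disjoint L A), ML f L x))
      (fun x => Real.exp (∑ L ∈ Finset.univ.filter (fun L => ¬ Disjoint L A), ML f L x))
      ?_ ?_ ?_
    · intro x y hxy
      refine congrArg (fun t => K⁻¹ * Real.exp t) (Finset.sum_congr rfl fun L hL => ?_)
      exact hd L A (B ∪ C) (Finset.mem_filter.1 hL).2 (by grind) hxy
    · intro x y hxy
      refine congrArg Real.exp (Finset.sum_congr rfl fun L hL => ?_)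
      by_cases h2 : Disjoint L B
      · exact hd L B (A ∪ C) h2 (by grind) hxy
      · rw [hz L (Finset.mem_filter.1 hL).2 h2, hz L (Finset.mem_filter.1 hL).2 h2]
    · intro x
      rw [mul_assoc, ← Real.exp_add, Finset.sum_filter_add_sum_filter_not, ML_sum, hf,
        Real.exp_log (margin_pos p hp _ _), margin_eq, inv_mul_cancel_left₀ hK.ne']
end

section
/- Let A, B, C be pairwise disjoint subsets of V with A and B nonempty. If X_A ⟂ X_B | X_C, then for every D ⊆ C and every x ∈ 𝔛_{A∪D}, λ_{A∪D}^{A∪B∪C}(x) = λ_{A∪D}^{A∪C}(x). -/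
open Finset

variable {V : Type*} [Fintype V] [DecidableEq V]
variable {𝔛 : V → Type*} [∀ v, Fintype (𝔛 v)] [∀ v, DecidableEq (𝔛 v)]
  [∀ v, Nonempty (𝔛 v)]

theorem sum_insert_aux (f : (∀ v, 𝔛 v) → ℝ) (a : V)
    (hf : ∀ x t, f (Function.update x a t) = f x) (L : Finset V) (ha : a ∉ L) (x : ∀ v, 𝔛 v) :
    ∑ j ∈ Finset.univ.filter (fun j : ∀ v, 𝔛 v => ∀ v ∈ L, j v = x v), f j =
    (Fintype.card (𝔛 a) : ℝ) *
      ∑ j ∈ Finset.univ.filter (fun j : ∀ v, 𝔛 v => ∀ v ∈ insert a L, j v = x v), f j := by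
  rw [← Finset.sum_fiberwise _ (fun j : ∀ v, 𝔛 v => j a)]
  have key : ∀ t : 𝔛 a,
      ∑ j ∈ (Finset.univ.filter (fun j : ∀ v, 𝔛 v => ∀ v ∈ L, j v = x v)).filter
        (fun j => j a = t), f j =
      ∑ j ∈ Finset.univ.filter (fun j : ∀ v, 𝔛 v => ∀ v ∈ insert a L, j v = x v), f j := by
    intro t
    refine Finset.sum_bij' (fun j _ => Function.update j a (x a))
      (fun j _ => Function.update j a t) ?_ ?_ ?_ ?_ ?_
    · intro j hj
      simp only [Finset.mem_filter, Finset.mem_univ, true_and] at hj ⊢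
      intro v hv
      by_cases h : v = a
      · subst h; simp
      · rw [Function.update_of_ne h]
        exact hj.1 v ((Finset.mem_insert.1 hv).resolve_left h)
    · intro j hj
      simp only [Finset.mem_filter, Finset.mem_univ, true_and] at hj ⊢
      refine ⟨?_, by simp⟩
      intro v hv
      have h : v ≠ a := fun h => ha (h ▸ hv)
      rw [Function.update_of_ne h]
      exact hj v (Finset.mem_insert_of_mem hv)
    · intro j hj
      simp only [Finset.mem_filter, Finset.mem_univ, true_and] at hj
      simp [← hj.2]
    · intro j hj
      simp only [Finset.mem_filter, Finset.mem_univ, true_and] at hj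
      simp [← hj a (Finset.mem_insert_self a L)]
    · intro j _
      exact (hf j _).symm
  rw [Finset.sum_congr rfl (fun t _ => key t)]
  simp

/-- The average of `f` over configurations agreeing with `x` on `L`. -/
noncomputable def avgAux (f : (∀ v, 𝔛 v) → ℝ) (L : Finset V) (x : ∀ v, 𝔛 v) : ℝ :=
  (∏ v ∈ Lᶜ, (Fintype.card (𝔛 v) : ℝ))⁻¹ *
    ∑ j ∈ Finset.univ.filter (fun j : ∀ v, 𝔛 v => ∀ v ∈ L, j v = x v), f j

theorem avgAux_insert (f : (∀ v, 𝔛 v) → ℝ) (a : V)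
    (hf : ∀ x t, f (Function.update x a t) = f x) (L : Finset V) (ha : a ∉ L) (x : ∀ v, 𝔛 v) :
    avgAux f L x = avgAux f (insert a L) x := by
  unfold avgAux
  rw [sum_insert_aux f a hf L ha x]
  have h : Lᶜ = insert a (insert a L)ᶜ := by
    ext v
    by_cases h : v = a
    · subst h; simp [ha]
    · simp [h]
  have hc : (Fintype.card (𝔛 a) : ℝ) ≠ 0 := by
    exact_mod_cast Fintype.card_ne_zero
  rw [h, Finset.prod_insert (by simp), mul_inv]
  field_simp

theorem alt_avgAux (f : (∀ v, 𝔛 v) → ℝ) (a : V)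
    (hf : ∀ x t, f (Function.update x a t) = f x) (L : Finset V) (ha : a ∈ L) (x : ∀ v, 𝔛 v) :
    ∑ L' ∈ L.powerset, (-1 : ℝ) ^ ((L \ L').card) * avgAux f L' x = 0 := by
  obtain ⟨K, hK, rfl⟩ : ∃ K, a ∉ K ∧ L = insert a K :=
    ⟨L.erase a, by simp, (Finset.insert_erase ha).symm⟩
  rw [Finset.sum_powerset_insert hK, ← Finset.sum_add_distrib]
  refine Finset.sum_eq_zero fun M hM => ?_
  have haM : a ∉ M := fun h => hK (Finset.mem_powerset.1 hM h)
  rw [← avgAux_insert f a hf M haM x]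
  have h1 : insert a K \ insert a M = K \ M := by
    ext v
    by_cases h : v = a
    · subst h; simp [hK]
    · simp [h]
  rw [h1, Finset.insert_sdiff_of_notMem _ haM, Finset.card_insert_of_notMem (by simp [hK]), pow_succ]
  ring

theorem margin_pos_aux (p : (∀ v, 𝔛 v) → ℝ) (hp : ∀ x, 0 < p x) (M : Finset V) (x : ∀ v, 𝔛 v) :
    0 < margin p M x :=
  Finset.sum_pos (fun y _ => hp y) ⟨x, by simp⟩

theorem margin_update_aux (p : (∀ v, 𝔛 v) → ℝ) (M : Finset V) (a : V) (ha : a ∉ M)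
    (x : ∀ v, 𝔛 v) (t : 𝔛 a) : margin p M (Function.update x a t) = margin p M x := by
  unfold margin
  congr 1
  ext y
  simp only [Finset.mem_filter, Finset.mem_univ, true_and]
  refine forall₂_congr fun v hv => ?_
  have h : v ≠ a := fun h => ha (h ▸ hv)
  rw [Function.update_of_ne h]

theorem stmt4 (p : (∀ v, 𝔛 v) → ℝ) (hp : ∀ x, 0 < p x) (hsum : ∑ x, p x = 1)
    (A B C : Finset V) (hA : A.Nonempty) (hB : B.Nonempty)
    (hAB : Disjoint A B) (hAC : Disjoint A C) (hBC : Disjoint B C)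
    (hci : CondIndep p A B C) :
    ∀ D ⊆ C, ∀ x : ∀ v, 𝔛 v,
      mll p (A ∪ D) (A ∪ B ∪ C) x = mll p (A ∪ D) (A ∪ C) x := by
  intro D _ x
  obtain ⟨a, ha⟩ := hA
  have haB : a ∉ B := Finset.disjoint_left.1 hAB ha
  have haC : a ∉ C := Finset.disjoint_left.1 hAC ha
  let g : (∀ v, 𝔛 v) → ℝ := fun j => Real.log (margin p (B ∪ C) j) - Real.log (margin p C j)
  have hg : ∀ x t, g (Function.update x a t) = g x := by
    intro x t
    simp only [g]
    rw [margin_update_aux p _ a (by simp [haB, haC]), margin_update_aux p _ a haC]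
  have hlog : ∀ j, g j = Real.log (margin p (A ∪ B ∪ C) j) - Real.log (margin p (A ∪ C) j) := by
    intro j
    have h := congrArg Real.log (hci j)
    rw [Real.log_mul (margin_pos_aux p hp _ _).ne' (margin_pos_aux p hp _ _).ne',
      Real.log_mul (margin_pos_aux p hp _ _).ne' (margin_pos_aux p hp _ _).ne'] at h
    simp only [g]
    linarith
  have h0 := alt_avgAux g a hg (A ∪ D) (Finset.mem_union_left _ ha) x
  rw [← sub_eq_zero, ← h0]
  unfold mll
  rw [← Finset.sum_sub_distrib]
  refine Finset.sum_congr rfl fun L' _ => ?_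
  unfold nu avgAux
  rw [Finset.sum_congr rfl (fun j _ => hlog j), Finset.sum_sub_distrib]
  ring
end

section
/- Let ∅ ≠ S ⊆ L ⊆ M ⊊ N ⊆ V. Then λ_A^M(x_A) = λ_A^N(x_A) holds for every A with S ⊆ A ⊆ L and every x_A ∈ 𝔛_A (i.e., 𝔛_N is collapsible into 𝔛_M with respect to the set C_S = {λ_A^N : S ⊆ A ⊆ L}) if and only if Σ_{R ⊆ S} (−1)^{|S∖R|} d̃_{L∖R}^{(M)}(x_{L∖R}) = 0 for every x_L ∈ 𝔛_L. -/
open Finset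

variable {V : Type*} [Fintype V] [DecidableEq V]
variable {𝔛 : V → Type*} [∀ v, Fintype (𝔛 v)] [∀ v, DecidableEq (𝔛 v)]
  [∀ v, Nonempty (𝔛 v)]

/-- `d^{(M)}(x_M) = log p_M(x_M) − ν_M^N(x_M)`. -/
noncomputable def dd (p : (∀ v, 𝔛 v) → ℝ) (M N : Finset V) (x : ∀ v, 𝔛 v) : ℝ :=
  Real.log (margin p M x) - nu p M N x

/-- `d̃_Z^{(M)}(x_Z) = (1/|𝔛_{M∖Z}|) Σ_{j ∈ 𝔛_M : j_Z = x_Z} d^{(M)}(j)`, written with sums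
over full configurations (for `Z ⊆ M` the extra coordinates cancel). -/
noncomputable def dtilde (p : (∀ v, 𝔛 v) → ℝ) (M N Z : Finset V) (x : ∀ v, 𝔛 v) : ℝ :=
  (∏ v ∈ Zᶜ, (Fintype.card (𝔛 v) : ℝ))⁻¹ *
    ∑ j ∈ Finset.univ.filter (fun j : ∀ v, 𝔛 v => ∀ v ∈ Z, j v = x v), dd p M N j

/-- Averaging operator onto the coordinates in `A`. -/
noncomputable def avgOp (A : Finset V) (f : (∀ v, 𝔛 v) → ℝ) (x : ∀ v, 𝔛 v) : ℝ :=
  (∏ v ∈ Aᶜ, (Fintype.card (𝔛 v) : ℝ))⁻¹ *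
    ∑ j ∈ Finset.univ.filter (fun j : ∀ v, 𝔛 v => ∀ v ∈ A, j v = x v), f j

theorem count_agree (A B : Finset V) (x k : ∀ v, 𝔛 v) (h : ∀ v ∈ A ∩ B, k v = x v) :
    (((Finset.univ.filter (fun j : ∀ v, 𝔛 v => (∀ v ∈ A, j v = x v) ∧ ∀ v ∈ B, k v = j v)).card : ℕ) : ℝ)
      = ∏ v ∈ (A ∪ B)ᶜ, (Fintype.card (𝔛 v) : ℝ) := by
  have : (Finset.univ.filter (fun j : ∀ v, 𝔛 v => (∀ v ∈ A, j v = x v) ∧ ∀ v ∈ B, k v = j v))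
      = Fintype.piFinset (fun v => if v ∈ A then {x v} else if v ∈ B then {k v} else Finset.univ) := by
    ext j
    simp only [Finset.mem_filter, Finset.mem_univ, true_and, Fintype.mem_piFinset]
    constructor
    · rintro ⟨h1, h2⟩ v
      split_ifs with hA hB
      · simp [h1 v hA]
      · simp [h2 v hB]
      · simp
    · intro hj
      have hA : ∀ v ∈ A, j v = x v := by
        intro v hv
        have := hj v
        simpa [hv] using this
      refine ⟨hA, ?_⟩
      intro v hv
      by_cases hvA : v ∈ A
      · rw [hA v hvA, h v (Finset.mem_inter.2 ⟨hvA, hv⟩)]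
      · have := hj v
        simp [hvA, hv] at this
        exact this.symm
  rw [this, Fintype.card_piFinset, Nat.cast_prod,
    ← Finset.prod_subset (Finset.subset_univ ((A ∪ B)ᶜ))]
  · refine Finset.prod_congr rfl ?_
    intro v hv
    simp only [Finset.mem_compl, Finset.mem_union, not_or] at hv
    simp [hv.1, hv.2]
  · intro v _ hv
    simp only [Finset.mem_compl, Finset.mem_union, not_not] at hv
    by_cases hA : v ∈ A
    · simp [hA]
    · simp [hA, hv.resolve_left hA]

theorem avgOp_avgOp (A B : Finset V) (f : (∀ v, 𝔛 v) → ℝ) (x : ∀ v, 𝔛 v) :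
    avgOp A (avgOp B f) x = avgOp (A ∩ B) f x := by
  have hne : ∀ C : Finset V, (∏ v ∈ C, (Fintype.card (𝔛 v) : ℝ)) ≠ 0 := by
    intro C
    refine Finset.prod_ne_zero_iff.2 fun v _ => ?_
    exact_mod_cast Fintype.card_ne_zero
  have key : ∑ j ∈ Finset.univ.filter (fun j : ∀ v, 𝔛 v => ∀ v ∈ A, j v = x v),
      ∑ k ∈ Finset.univ.filter (fun k : ∀ v, 𝔛 v => ∀ v ∈ B, k v = j v), f k
      = (∏ v ∈ (A ∪ B)ᶜ, (Fintype.card (𝔛 v) : ℝ)) *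
        ∑ k ∈ Finset.univ.filter (fun k : ∀ v, 𝔛 v => ∀ v ∈ A ∩ B, k v = x v), f k := by
    rw [Finset.mul_sum]
    simp only [Finset.sum_filter]
    simp only [← Finset.sum_filter (fun j : ∀ v, 𝔛 v => ∀ v ∈ A, j v = x v)]
    rw [Finset.sum_comm]
    refine Finset.sum_congr rfl fun k _ => ?_
    rw [← Finset.sum_filter, Finset.filter_filter, Finset.sum_const, nsmul_eq_mul]
    split_ifs with h
    · rw [count_agree A B x k h]
    · have : (Finset.univ.filter (fun j : ∀ v, 𝔛 v =>
          (∀ v ∈ A, j v = x v) ∧ ∀ v ∈ B, k v = j v)) = ∅ := by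
        refine Finset.filter_eq_empty_iff.2 ?_
        rintro j _ ⟨h1, h2⟩
        refine h fun v hv => ?_
        rw [Finset.mem_inter] at hv
        rw [h2 v hv.2, h1 v hv.1]
      rw [this]; simp
  have hprod := Finset.prod_union_inter (s₁ := Aᶜ) (s₂ := Bᶜ)
    (f := fun v => (Fintype.card (𝔛 v) : ℝ))
  rw [← Finset.compl_inter, ← Finset.compl_union] at hprod
  unfold avgOp
  rw [← Finset.mul_sum, key]
  have h1 := hne Aᶜ
  have h2 := hne Bᶜ
  have h3 := hne (A ∩ B)ᶜ
  rw [← mul_assoc, ← mul_assoc]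
  congr 1
  field_simp
  linarith

/-- Möbius sum. -/
noncomputable def mob {V : Type*} [DecidableEq V] (A : Finset V) (h : Finset V → ℝ) : ℝ :=
  ∑ B ∈ A.powerset, (-1 : ℝ) ^ ((A \ B).card) * h B

theorem mob_insert {V : Type*} [DecidableEq V] (a : V) (A : Finset V) (ha : a ∉ A)
    (h : Finset V → ℝ) :
    mob (insert a A) h = mob A (fun B => h (insert a B)) - mob A h := by
  unfold mob
  rw [Finset.sum_powerset_insert ha, add_comm, sub_eq_add_neg, ← Finset.sum_neg_distrib]
  congr 1
  · refine Finset.sum_congr rfl fun B hB => ?_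
    rw [Finset.insert_sdiff_insert, Finset.sdiff_insert_of_notMem ha]
  · refine Finset.sum_congr rfl fun B hB => ?_
    have haB : a ∉ B := fun h => ha (Finset.mem_powerset.1 hB h)
    rw [Finset.insert_sdiff_of_notMem _ haB, Finset.card_insert_of_notMem (by simp [ha])]
    ring

theorem sum_mob {V : Type*} [DecidableEq V] (L : Finset V) :
    ∀ h : Finset V → ℝ, ∑ A ∈ L.powerset, mob A h = h L := by
  induction L using Finset.induction_on with
  | empty => intro h; simp [mob]
  | insert a L ha ih =>
    intro h
    rw [Finset.sum_powerset_insert ha]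
    have : ∀ A ∈ L.powerset, mob (insert a A) h = mob A (fun B => h (insert a B)) - mob A h :=
      fun A hA => mob_insert a A (fun h => ha (Finset.mem_powerset.1 hA h)) h
    rw [Finset.sum_congr rfl this, Finset.sum_sub_distrib, ih, ih]
    ring

theorem sum_Icc_mob {V : Type*} [DecidableEq V] (h : Finset V → ℝ) (S : Finset V) :
    ∀ L : Finset V, S ⊆ L →
    ∑ R ∈ S.powerset, (-1 : ℝ) ^ ((S \ R).card) * h (L \ R) =
      (-1 : ℝ) ^ S.card * ∑ A ∈ L.powerset.filter (fun A => S ⊆ A), mob A h := by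
  induction S using Finset.induction_on with
  | empty => intro L _; simp [sum_mob]
  | insert a S ha ih =>
    intro L hL
    have hSL : S ⊆ L := (Finset.subset_insert _ _).trans hL
    have haL : a ∈ L := hL (Finset.mem_insert_self _ _)
    have e := mob_insert a S ha (fun R => h (L \ R))
    unfold mob at e
    rw [e]
    have e2 : ∀ R : Finset V, L \ insert a R = L.erase a \ R := by
      intro R; ext v; simp; tauto
    simp only [e2]
    rw [ih L hSL, ih (L.erase a) (fun v hv => Finset.mem_erase.2
      ⟨fun h => ha (h ▸ hv), hSL hv⟩)]
    have e3 := Finset.sum_filter_add_sum_filter_not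
      (L.powerset.filter (fun A => S ⊆ A)) (fun A => a ∈ A) (fun A => mob A h)
    have e4 : (L.powerset.filter (fun A => S ⊆ A)).filter (fun A => a ∈ A)
        = L.powerset.filter (fun A => insert a S ⊆ A) := by
      ext A; simp [Finset.insert_subset_iff]; tauto
    have e5 : (L.powerset.filter (fun A => S ⊆ A)).filter (fun A => a ∉ A)
        = (L.erase a).powerset.filter (fun A => S ⊆ A) := by
      ext A; simp [Finset.subset_erase]; tauto
    rw [e4, e5] at e3
    rw [← e3, Finset.card_insert_of_notMem ha]
    ring

theorem mob_sdiff {V : Type*} [DecidableEq V] (h : Finset V → ℝ) (A R : Finset V)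
    (hR : R.Nonempty) (hRA : R ⊆ A) : mob A (fun B => h (B \ R)) = 0 := by
  obtain ⟨a, ha⟩ := hR
  rw [← Finset.insert_erase (hRA ha), mob_insert a _ (Finset.notMem_erase _ _)]
  simp only [Finset.insert_sdiff_of_mem _ ha, sub_self]

theorem avgOp_sub (A : Finset V) (f g : (∀ v, 𝔛 v) → ℝ) (x : ∀ v, 𝔛 v) :
    avgOp A (fun y => f y - g y) x = avgOp A f x - avgOp A g x := by
  unfold avgOp
  rw [Finset.sum_sub_distrib, mul_sub]

theorem avgOp_sum {ι : Type*} (s : Finset ι) (c : ι → ℝ) (A : Finset V)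
    (f : ι → (∀ v, 𝔛 v) → ℝ) (x : ∀ v, 𝔛 v) :
    avgOp A (fun y => ∑ i ∈ s, c i * f i y) x = ∑ i ∈ s, c i * avgOp A (f i) x := by
  unfold avgOp
  rw [Finset.sum_comm, Finset.mul_sum]
  refine Finset.sum_congr rfl fun i _ => ?_
  rw [← Finset.mul_sum]
  ring

theorem avgOp_dd (p : (∀ v, 𝔛 v) → ℝ) (M N Z : Finset V) (hZ : Z ⊆ M) (x : ∀ v, 𝔛 v) :
    avgOp Z (dd p M N) x = nu p Z M x - nu p Z N x := by
  have h1 : dd p M N = fun y => Real.log (margin p M y) -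
    avgOp M (fun j => Real.log (margin p N j)) y := rfl
  rw [h1, avgOp_sub, avgOp_avgOp, Finset.inter_eq_left.2 hZ]
  rfl

theorem mll_sub (p : (∀ v, 𝔛 v) → ℝ) (A M N : Finset V) (hA : A ⊆ M) (x : ∀ v, 𝔛 v) :
    mll p A M x - mll p A N x = mob A (fun B => avgOp B (dd p M N) x) := by
  unfold mll mob
  rw [← Finset.sum_sub_distrib]
  refine Finset.sum_congr rfl fun B hB => ?_
  beta_reduce
  rw [avgOp_dd p M N B ((Finset.mem_powerset.1 hB).trans hA)]
  ring

theorem stmt7 (p : (∀ v, 𝔛 v) → ℝ) (hp : ∀ x, 0 < p x) (hsum : ∑ x, p x = 1)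
    (S L M N : Finset V) (hS : S.Nonempty) (hSL : S ⊆ L) (hLM : L ⊆ M) (hMN : M ⊂ N) :
    (∀ A : Finset V, S ⊆ A → A ⊆ L → ∀ x : ∀ v, 𝔛 v, mll p A M x = mll p A N x) ↔
    (∀ x : ∀ v, 𝔛 v,
      ∑ R ∈ S.powerset, (-1 : ℝ) ^ ((S \ R).card) * dtilde p M N (L \ R) x = 0) := by
  have hdt : ∀ Z x, dtilde p M N Z x = avgOp Z (dd p M N) x := fun _ _ => rfl
  simp only [hdt]
  constructor
  · intro H x
    rw [sum_Icc_mob (fun B => avgOp B (dd p M N) x) S L hSL]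
    rw [Finset.sum_eq_zero, mul_zero]
    intro A hA
    rw [Finset.mem_filter, Finset.mem_powerset] at hA
    rw [← mll_sub p A M N (hA.1.trans hLM), H A hA.2 hA.1, sub_self]
  · intro H A hSA hAL x
    rw [← sub_eq_zero, mll_sub p A M N (hAL.trans hLM)]
    have h0 : ∀ B ⊆ A, ∑ R ∈ S.powerset, (-1 : ℝ) ^ ((S \ R).card) *
        avgOp (B \ R) (dd p M N) x = 0 := by
      intro B hB
      have e := avgOp_sum S.powerset (fun R => (-1 : ℝ) ^ ((S \ R).card)) B
        (fun R => avgOp (L \ R) (dd p M N)) x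
      simp only [H, avgOp_avgOp] at e
      have e2 : ∀ R, B ∩ (L \ R) = B \ R := by
        intro R
        rw [← Finset.inter_sdiff_assoc, Finset.inter_eq_left.2 (hB.trans hAL)]
      simp only [e2] at e
      rw [← e]
      simp [avgOp]
    have h1 : ∑ R ∈ S.powerset, (-1 : ℝ) ^ ((S \ R).card) *
        mob A (fun B => avgOp (B \ R) (dd p M N) x) = 0 := by
      unfold mob
      simp only [Finset.mul_sum]
      rw [Finset.sum_comm]
      refine Finset.sum_eq_zero fun B hB => ?_
      have := h0 B (Finset.mem_powerset.1 hB)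
      rw [← mul_zero ((-1 : ℝ) ^ ((A \ B).card)), ← this, Finset.mul_sum]
      refine Finset.sum_congr rfl fun R _ => ?_
      ring
    rw [Finset.sum_eq_single ∅] at h1
    · simpa using h1
    · intro R hR hne
      rw [mob_sdiff (fun B => avgOp B (dd p M N) x) A R (Finset.nonempty_iff_ne_empty.2 hne)
        ((Finset.mem_powerset.1 hR).trans hSA), mul_zero]
    · intro h; simp at h
end

section
/- Let ∅ ≠ L ⊆ M ⊊ N ⊆ V. Then λ_Z^N(x_Z) = 0 for every Z ⊆ N with L ⊊ Z and Z ∩ (N∖M) ≠ ∅ and every x_Z ∈ 𝔛_Z, if and only if Σ_{Z ⊆ N : L ⊊ Z, Z ∩ (N∖M) ≠ ∅} λ_Z^N(x_Z) = 0 for every x_N ∈ 𝔛_N (where x_Z denotes the restriction of x_N to Z). -/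
open Finset

variable {V : Type*} [Fintype V] [DecidableEq V]
variable {𝔛 : V → Type*} [∀ v, Fintype (𝔛 v)] [∀ v, DecidableEq (𝔛 v)]
  [∀ v, Nonempty (𝔛 v)]

/-- Average of `g` over the coordinates outside `A`. -/
noncomputable def av (A : Finset V) (g : (∀ v, 𝔛 v) → ℝ) (x : ∀ v, 𝔛 v) : ℝ :=
  (∏ v, (Fintype.card (𝔛 v) : ℝ))⁻¹ * ∑ y : ∀ v, 𝔛 v, g (A.piecewise x y)

theorem prod_card_ne (S : Finset V) : (∏ v ∈ S, (Fintype.card (𝔛 v) : ℝ)) ≠ 0 :=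
  Finset.prod_ne_zero_iff.2 fun v _ => by
    have : Fintype.card (𝔛 v) ≠ 0 := Fintype.card_ne_zero
    exact_mod_cast this

theorem sum_pw (A : Finset V) (g : (∀ v, 𝔛 v) → ℝ) (x : ∀ v, 𝔛 v) :
    ∑ y : ∀ v, 𝔛 v, g (A.piecewise x y) = (∏ v ∈ A, (Fintype.card (𝔛 v) : ℝ)) *
      ∑ j ∈ Finset.univ.filter (fun j : ∀ v, 𝔛 v => ∀ v ∈ A, j v = x v), g j := by
  rw [← Finset.sum_fiberwise_of_maps_to (s := Finset.univ)
    (t := Finset.univ.filter (fun j : ∀ v, 𝔛 v => ∀ v ∈ A, j v = x v))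
    (g := fun y => A.piecewise x y), Finset.mul_sum]
  · refine Finset.sum_congr rfl fun j hj => ?_
    rw [Finset.mem_filter] at hj
    have hs : (Finset.univ.filter (fun y : ∀ v, 𝔛 v => A.piecewise x y = j)) =
        Fintype.piFinset (fun v => if v ∈ A then (Finset.univ : Finset (𝔛 v)) else {j v}) := by
      ext y
      simp only [Finset.mem_filter, Finset.mem_univ, true_and, Fintype.mem_piFinset]
      constructor
      · intro h v
        by_cases hv : v ∈ A
        · simp [hv]
        · simp [hv, ← h]
      · intro h
        funext v
        have := h v
        by_cases hv : v ∈ A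
        · simp [hv, hj.2 v hv]
        · simpa [hv] using this
    have hc : ((Finset.univ.filter (fun y : ∀ v, 𝔛 v => A.piecewise x y = j)).card : ℝ) =
        ∏ v ∈ A, (Fintype.card (𝔛 v) : ℝ) := by
      rw [hs, Fintype.card_piFinset]
      push_cast
      rw [← Finset.prod_subset (Finset.subset_univ A)]
      · refine Finset.prod_congr rfl fun v hv => ?_
        simp [hv]
      · intro v _ hv
        simp [hv]
    rw [← hc, ← nsmul_eq_mul, ← Finset.sum_const]
    refine Finset.sum_congr rfl fun y hy => ?_
    rw [(Finset.mem_filter.1 hy).2]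
  · intro y _
    simp +contextual

theorem nu_eq_av (p : (∀ v, 𝔛 v) → ℝ) (A N : Finset V) (x : ∀ v, 𝔛 v) :
    nu p A N x = av A (fun j => Real.log (margin p N j)) x := by
  unfold nu av
  rw [sum_pw A (fun j => Real.log (margin p N j)), ← Finset.prod_mul_prod_compl A, mul_inv, ← mul_assoc]
  congr 1
  have := prod_card_ne (𝔛 := 𝔛) A
  field_simp

theorem av_av (A B : Finset V) (g : (∀ v, 𝔛 v) → ℝ) (x : ∀ v, 𝔛 v) :
    av A (av B g) x = av (A ∩ B) g x := by
  unfold av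
  rw [← Finset.mul_sum]
  congr 1
  have h1 : ∀ y z : ∀ v, 𝔛 v, B.piecewise (A.piecewise x y) z =
      (A ∩ B).piecewise x (B.piecewise y z) := by
    intro y z
    funext v
    by_cases hA : v ∈ A <;> by_cases hB : v ∈ B <;> simp [hA, hB]
  simp only [h1]
  rw [← Fintype.sum_prod_type' (f := fun y z : ∀ v, 𝔛 v =>
    g ((A ∩ B).piecewise x (B.piecewise y z)))]
  have hinv : Function.Involutive (fun q : (∀ v, 𝔛 v) × (∀ v, 𝔛 v) =>
      (B.piecewise q.1 q.2, B.piecewise q.2 q.1)) := by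
    rintro ⟨y, z⟩
    ext v <;> by_cases hB : v ∈ B <;> simp [hB]
  rw [Fintype.sum_bijective _ hinv.bijective _
    (fun q : (∀ v, 𝔛 v) × (∀ v, 𝔛 v) => g ((A ∩ B).piecewise x q.1)) (fun q => rfl),
    Fintype.sum_prod_type]
  simp only [Finset.sum_const, nsmul_eq_mul, ← Finset.mul_sum]
  rw [Finset.card_univ, Fintype.card_pi, ← mul_assoc]
  push_cast
  rw [inv_mul_cancel₀ (prod_card_ne _), one_mul]

theorem av_sum {ι : Type*} (A : Finset V) (s : Finset ι) (g : ι → (∀ v, 𝔛 v) → ℝ)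
    (x : ∀ v, 𝔛 v) : av A (fun y => ∑ i ∈ s, g i y) x = ∑ i ∈ s, av A (g i) x := by
  unfold av
  rw [Finset.sum_comm, Finset.mul_sum]

theorem av_smul (A : Finset V) (c : ℝ) (g : (∀ v, 𝔛 v) → ℝ)
    (x : ∀ v, 𝔛 v) : av A (fun y => c * g y) x = c * av A g x := by
  unfold av
  rw [← Finset.mul_sum]
  ring

theorem av_mll (p : (∀ v, 𝔛 v) → ℝ) (A Z N : Finset V) (x : ∀ v, 𝔛 v) :
    av A (mll p Z N) x = ∑ B ∈ Z.powerset, (-1 : ℝ) ^ ((Z \ B).card) * nu p (A ∩ B) N x := by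
  have : mll p Z N = fun y => ∑ B ∈ Z.powerset, (-1 : ℝ) ^ ((Z \ B).card) *
      av B (fun j => Real.log (margin p N j)) y := by
    funext y
    simp only [mll, nu_eq_av]
  rw [this, av_sum]
  refine Finset.sum_congr rfl fun B _ => ?_
  rw [av_smul, av_av, nu_eq_av]

theorem av_mll_sub (p : (∀ v, 𝔛 v) → ℝ) (A Z N : Finset V) (x : ∀ v, 𝔛 v) (h : Z ⊆ A) :
    av A (mll p Z N) x = mll p Z N x := by
  rw [av_mll, mll]
  refine Finset.sum_congr rfl fun B hB => ?_
  rw [Finset.inter_eq_right.2 ((Finset.mem_powerset.1 hB).trans h)]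

theorem av_mll_not (p : (∀ v, 𝔛 v) → ℝ) (A Z N : Finset V) (x : ∀ v, 𝔛 v) (h : ¬ Z ⊆ A) :
    av A (mll p Z N) x = 0 := by
  rw [av_mll]
  obtain ⟨v, hvZ, hvA⟩ := Finset.not_subset.1 h
  rw [← Finset.insert_erase hvZ, Finset.sum_powerset_insert (Finset.notMem_erase v Z),
    ← Finset.sum_add_distrib]
  refine Finset.sum_eq_zero fun B hB => ?_
  have hB := Finset.mem_powerset.1 hB
  have hvB : v ∉ B := fun hv => Finset.notMem_erase v Z (hB hv)
  rw [Finset.insert_sdiff_of_notMem _ hvB, Finset.card_insert_of_notMem (by simp),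
    Finset.insert_sdiff_insert, Finset.sdiff_insert_of_notMem (Finset.notMem_erase v Z),
    Finset.inter_insert_of_notMem hvA, pow_succ]
  ring

theorem stmt8 (p : (∀ v, 𝔛 v) → ℝ) (hp : ∀ x, 0 < p x) (hsum : ∑ x, p x = 1)
    (L M N : Finset V) (hL : L.Nonempty) (hLM : L ⊆ M) (hMN : M ⊂ N) :
    (∀ Z ⊆ N, L ⊂ Z → (Z ∩ (N \ M)).Nonempty → ∀ x : ∀ v, 𝔛 v, mll p Z N x = 0) ↔
    (∀ x : ∀ v, 𝔛 v,
      ∑ Z ∈ N.powerset.filter (fun Z => L ⊂ Z ∧ (Z ∩ (N \ M)).Nonempty),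
        mll p Z N x = 0) := by
  constructor
  · intro h x
    refine Finset.sum_eq_zero fun Z hZ => ?_
    rw [Finset.mem_filter, Finset.mem_powerset] at hZ
    exact h Z hZ.1 hZ.2.1 hZ.2.2 x
  · intro h Z
    induction Z using Finset.strongInduction with
    | H A ih =>
      intro hAN hLA hA x
      have h0 : av A (fun y => ∑ Z ∈ N.powerset.filter
          (fun Z => L ⊂ Z ∧ (Z ∩ (N \ M)).Nonempty), mll p Z N y) x = 0 := by
        simp [av, h]
      rw [av_sum, Finset.sum_eq_single A] at h0
      · rwa [av_mll_sub p A A N x subset_rfl] at h0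
      · intro Z hZ hne
        rw [Finset.mem_filter, Finset.mem_powerset] at hZ
        by_cases hs : Z ⊆ A
        · rw [av_mll_sub p A Z N x hs]
          exact ih Z (hs.ssubset_of_ne hne) hZ.1 hZ.2.1 hZ.2.2 x
        · exact av_mll_not p A Z N x hs
      · intro hn
        exact absurd (Finset.mem_filter.2 ⟨Finset.mem_powerset.2 hAN, hLA, hA⟩) hn
end

section
/- Let ∅ ≠ L ⊆ M ⊊ N ⊆ V and suppose 𝔛_N is collapsible over N∖M into 𝔛_M with respect to λ_L^N, i.e., λ_L^M(x_L) = λ_L^N(x_L) for all x_L. Then 𝔛_N is strictly collapsible with respect to λ_L^N (i.e., in addition λ_Z^N(x_Z) = 0 for every Z ⊆ N with L ⊊ Z and Z ∩ (N∖M) ≠ ∅) if and only if for every x_N ∈ 𝔛_N: Σ_{Z ⊆ L} (−1)^{|L∖Z|} ν_{Z∪(N∖L)}^N(x_Z, x_{N∖L}) = Σ_{Z ⊆ L} (−1)^{|L∖Z|} ν_{Z∪(M∖L)}^N(x_Z, x_{M∖L}). -/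
open Finset

variable {V : Type*} [Fintype V] [DecidableEq V]
variable {𝔛 : V → Type*} [∀ v, Fintype (𝔛 v)] [∀ v, DecidableEq (𝔛 v)]
  [∀ v, Nonempty (𝔛 v)]

/-- Number of configurations. -/
noncomputable def ctot (𝔜 : V → Type*) [∀ v, Fintype (𝔜 v)] : ℝ :=
  ∏ v, (Fintype.card (𝔜 v) : ℝ)

theorem ctot_ne : ctot 𝔛 ≠ 0 := by
  unfold ctot
  rw [Finset.prod_ne_zero_iff]
  intro v _
  exact_mod_cast Fintype.card_ne_zero

theorem nu_eq (p : (∀ v, 𝔛 v) → ℝ) (B N : Finset V) (x : ∀ v, 𝔛 v) :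
    ∑ k : (∀ v, 𝔛 v), Real.log (margin p N (B.piecewise x k)) = ctot 𝔛 * nu p B N x := by
  have h1 : ∑ k : (∀ v, 𝔛 v), Real.log (margin p N (B.piecewise x k)) =
      ∑ m ∈ Finset.univ.filter (fun j : ∀ v, 𝔛 v => ∀ v ∈ B, j v = x v),
        (∏ v ∈ B, (Fintype.card (𝔛 v) : ℝ)) * Real.log (margin p N m) := by
    rw [← Finset.sum_fiberwise_of_maps_to (s := Finset.univ)
      (t := Finset.univ.filter (fun j : ∀ v, 𝔛 v => ∀ v ∈ B, j v = x v))
      (g := fun k => B.piecewise x k)]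
    · refine Finset.sum_congr rfl fun m hm => ?_
      simp only [Finset.mem_filter, Finset.mem_univ, true_and] at hm
      rw [Finset.sum_congr rfl (g := fun _ => Real.log (margin p N m))]
      · rw [Finset.sum_const, nsmul_eq_mul]
        congr 1
        have : (Finset.univ.filter fun k : (∀ v, 𝔛 v) => B.piecewise x k = m) =
            Fintype.piFinset (fun v => if v ∈ B then Finset.univ else {m v}) := by
          ext k
          simp only [Finset.mem_filter, Finset.mem_univ, true_and, Fintype.mem_piFinset]
          constructor
          · intro h v
            by_cases hv : v ∈ B
            · simp [hv]
            · have := congrFun h v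
              simpa [hv] using this
          · intro h
            funext v
            have := h v
            by_cases hv : v ∈ B
            · simp [hv, hm v hv]
            · simpa [hv] using this
        rw [this, Fintype.card_piFinset]
        push_cast
        rw [← Finset.prod_subset (Finset.subset_univ B)]
        · exact Finset.prod_congr rfl fun v hv => by simp [hv]
        · intro v _ hv
          simp [hv]
      · intro k hk
        simp only [Finset.mem_filter, Finset.mem_univ, true_and] at hk
        rw [hk]
    · intro k _
      simp only [Finset.mem_filter, Finset.mem_univ, true_and]
      intro v hv
      simp [hv]
  rw [h1, ← Finset.mul_sum, nu, ← mul_assoc]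
  congr 1
  rw [ctot, ← Finset.prod_mul_prod_compl B, mul_assoc, mul_inv_cancel₀, mul_one]
  rw [Finset.prod_ne_zero_iff]
  intro v _
  exact_mod_cast Fintype.card_ne_zero

/-- Swap of coordinates. -/
def swapEquiv (B : Finset V) : ((∀ v, 𝔛 v) × (∀ v, 𝔛 v)) ≃ ((∀ v, 𝔛 v) × (∀ v, 𝔛 v)) where
  toFun q := (B.piecewise q.1 q.2, B.piecewise q.2 q.1)
  invFun q := (B.piecewise q.1 q.2, B.piecewise q.2 q.1)
  left_inv q := by
    ext v <;> by_cases hv : v ∈ B <;> simp [hv]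
  right_inv q := by
    ext v <;> by_cases hv : v ∈ B <;> simp [hv]

theorem nu_avg (p : (∀ v, 𝔛 v) → ℝ) (A B N : Finset V) (x : ∀ v, 𝔛 v) :
    ∑ j : (∀ v, 𝔛 v), nu p B N (A.piecewise x j) = ctot 𝔛 * nu p (B ∩ A) N x := by
  apply mul_left_cancel₀ (ctot_ne (𝔛 := 𝔛))
  rw [Finset.mul_sum, ← nu_eq]
  simp_rw [← nu_eq]
  rw [← Fintype.sum_prod_type'
    (f := fun j k => Real.log (margin p N (B.piecewise (A.piecewise x j) k)))]
  have h : ∀ q : (∀ v, 𝔛 v) × (∀ v, 𝔛 v),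
      Real.log (margin p N (B.piecewise (A.piecewise x q.1) q.2)) =
      (fun r : (∀ v, 𝔛 v) × (∀ v, 𝔛 v) =>
        Real.log (margin p N ((B ∩ A).piecewise x r.1))) (swapEquiv B q) := by
    intro q
    simp only [swapEquiv, Equiv.coe_fn_mk]
    congr 2
    funext v
    by_cases hv : v ∈ B <;> by_cases hv' : v ∈ A <;> simp [hv, hv']
  rw [Finset.sum_congr rfl fun q _ => h q, Equiv.sum_comp (swapEquiv B) (fun r : (∀ v, 𝔛 v) × (∀ v, 𝔛 v) =>
        Real.log (margin p N ((B ∩ A).piecewise x r.1))), Fintype.sum_prod_type]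
  simp only [Finset.sum_const, nsmul_eq_mul, ← Finset.mul_sum]
  congr 1
  simp [ctot]

/-- Partial Moebius transform of a set function. -/
noncomputable def gpar (f : Finset V → ℝ) (L A : Finset V) : ℝ :=
  ∑ Z ∈ L.powerset, (-1 : ℝ) ^ ((L \ Z).card) * f (Z ∪ A)

theorem gpar_insert (f : Finset V → ℝ) (L A : Finset V) (w : V) (hw : w ∉ L) :
    gpar f (insert w L) A = gpar f L (insert w A) - gpar f L A := by
  unfold gpar
  rw [Finset.sum_powerset_insert hw, add_comm, sub_eq_add_neg, ← Finset.sum_neg_distrib]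
  congr 1
  · refine Finset.sum_congr rfl fun Z hZ => ?_
    rw [Finset.mem_powerset] at hZ
    congr 2
    · congr 1
      ext v
      have := @hZ v
      by_cases h : v = w
      · subst h; simp [hw]
      · simp [h]
    · simp
  · refine Finset.sum_congr rfl fun Z hZ => ?_
    rw [Finset.mem_powerset] at hZ
    rw [Finset.insert_sdiff_of_notMem _ (fun h => hw (hZ h)),
      Finset.card_insert_of_notMem (by simp [hw]), pow_succ]
    ring

theorem stmt9 (p : (∀ v, 𝔛 v) → ℝ) (hp : ∀ x, 0 < p x) (hsum : ∑ x, p x = 1)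
    (L M N : Finset V) (hL : L.Nonempty) (hLM : L ⊆ M) (hMN : M ⊂ N)
    (hcol : ∀ x : ∀ v, 𝔛 v, mll p L M x = mll p L N x) :
    (∀ Z ⊆ N, L ⊂ Z → (Z ∩ (N \ M)).Nonempty → ∀ x : ∀ v, 𝔛 v, mll p Z N x = 0) ↔
    (∀ x : ∀ v, 𝔛 v,
      ∑ Z ∈ L.powerset, (-1 : ℝ) ^ ((L \ Z).card) * nu p (Z ∪ (N \ L)) N x =
      ∑ Z ∈ L.powerset, (-1 : ℝ) ^ ((L \ Z).card) * nu p (Z ∪ (M \ L)) N x) := by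
  have hm : ∀ Z x, mll p Z N x = gpar (fun Z => nu p Z N x) Z ∅ := by
    intro Z x
    simp [mll, gpar]
  have hMN' := hMN.1
  constructor
  · intro H x
    change gpar (fun Z => nu p Z N x) L (N \ L) = gpar (fun Z => nu p Z N x) L (M \ L)
    set f := fun Z => nu p Z N x with hf
    have key : ∀ A : Finset V, ∀ L', L ⊆ L' → L' ⊆ N → (L' ∩ (N \ M)).Nonempty → A ⊆ N →
        Disjoint A L' → gpar f L' A = 0 := by
      intro A
      induction A using Finset.induction_on with
      | empty =>
        intro L' h1 h2 h3 _ _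
        rw [← hm]
        refine H L' h2 ⟨h1, fun h => ?_⟩ h3 x
        obtain ⟨v, hv⟩ := h3
        simp only [Finset.mem_inter, Finset.mem_sdiff] at hv
        exact hv.2.2 (hLM (h hv.1))
      | insert w A hw ih =>
        intro L' h1 h2 h3 h4 h5
        rw [Finset.disjoint_insert_left] at h5
        rw [Finset.insert_subset_iff] at h4
        have e := gpar_insert f L' A w h5.1
        rw [ih L' h1 h2 h3 h4.2 h5.2, ih (insert w L') (h1.trans (Finset.subset_insert _ _))
          (Finset.insert_subset h4.1 h2)
          (h3.mono (Finset.inter_subset_inter_right (Finset.subset_insert _ _))) h4.2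
          (by rw [Finset.disjoint_insert_right]; exact ⟨hw, h5.2⟩)] at e
        linarith
    have key2 : ∀ C : Finset V, C ⊆ N \ M → gpar f L (C ∪ (M \ L)) = gpar f L (M \ L) := by
      intro C
      induction C using Finset.induction_on with
      | empty => intro _; simp
      | insert w C hw ih =>
        intro h
        rw [Finset.insert_subset_iff] at h
        have hwN := Finset.mem_sdiff.1 h.1
        have hwL : w ∉ L := fun h' => hwN.2 (hLM h')
        have e := gpar_insert f L (C ∪ (M \ L)) w hwL
        rw [key _ (insert w L) (Finset.subset_insert _ _)
          (Finset.insert_subset hwN.1 (hLM.trans hMN')) ⟨w, by simp [hwN]⟩, ih h.2] at e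
        · rw [Finset.insert_union]; linarith
        · refine Finset.union_subset (h.2.trans Finset.sdiff_subset)
            (Finset.sdiff_subset.trans hMN')
        · rw [Finset.disjoint_left]
          intro v hv hv'
          simp only [Finset.mem_union, Finset.mem_sdiff, Finset.mem_insert] at hv hv'
          rcases hv' with rfl | hv'
          · rcases hv with hv | hv
            · exact hw hv
            · exact hwN.2 hv.1
          · rcases hv with hv | hv
            · exact (Finset.mem_sdiff.1 (h.2 hv)).2 (hLM hv')
            · exact hv.2 hv'
    rw [← key2 (N \ M) subset_rfl]
    congr 1
    ext v
    have a := @hLM v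
    have b := @hMN' v
    simp only [Finset.mem_union, Finset.mem_sdiff]
    tauto
  · intro H Z hZN hLZ hZ x
    rw [hm]
    have base : ∀ A : Finset V, A ⊆ N → Disjoint A L →
        gpar (fun Z => nu p Z N x) L A = gpar (fun Z => nu p Z N x) L (A ∩ M) := by
      intro A hA hAL
      have h := Finset.sum_congr (rfl : (Finset.univ : Finset (∀ v, 𝔛 v)) = _)
        fun j _ => H ((A ∪ L).piecewise x j)
      rw [Finset.sum_comm, Finset.sum_comm (s := Finset.univ)] at h
      simp only [← Finset.mul_sum, nu_avg] at h
      simp only [mul_left_comm _ (ctot 𝔛)] at h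
      simp only [← Finset.mul_sum] at h
      have h := mul_left_cancel₀ (ctot_ne (𝔛 := 𝔛)) h
      unfold gpar
      rw [Finset.disjoint_left] at hAL
      convert h using 4 with W hW W hW
      · rw [Finset.mem_powerset] at hW
        ext v
        have a := @hW v
        have b := @hA v
        have c := @hAL v
        simp only [Finset.mem_union, Finset.mem_sdiff, Finset.mem_inter]
        tauto
      · rw [Finset.mem_powerset] at hW
        ext v
        have a := @hW v
        have b := @hA v
        have c := @hAL v
        simp only [Finset.mem_union, Finset.mem_sdiff, Finset.mem_inter]
        tauto
    set f := fun Z => nu p Z N x with hf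
    obtain ⟨w, hw⟩ := hZ
    simp only [Finset.mem_inter, Finset.mem_sdiff] at hw
    obtain ⟨hwZ, hwN, hwM⟩ := hw
    have hwL : w ∉ L := fun h => hwM (hLM h)
    have step : ∀ D : Finset V, D ⊆ N → Disjoint D L → w ∉ D → ∀ A ⊆ N, Disjoint A L →
        Disjoint A D → gpar f (D ∪ L) (insert w A) = gpar f (D ∪ L) A := by
      intro D
      induction D using Finset.induction_on with
      | empty =>
        intro _ _ _ A hA hAL _
        rw [Finset.empty_union, base (insert w A) (Finset.insert_subset hwN hA)
          (by rw [Finset.disjoint_insert_left]; exact ⟨hwL, hAL⟩), base A hA hAL,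
          Finset.insert_inter_of_notMem hwM]
      | insert u D hu ih =>
        intro h1 h2 h3 A hA hAL hAD
        rw [Finset.insert_subset_iff] at h1
        rw [Finset.disjoint_insert_left] at h2
        rw [Finset.disjoint_insert_right] at hAD
        rw [Finset.mem_insert, not_or] at h3
        have hu' : u ∉ D ∪ L := by simp [hu, h2.1]
        rw [Finset.insert_union, gpar_insert _ _ _ _ hu', gpar_insert _ _ _ _ hu',
          Finset.insert_comm, ih h1.2 h2.2 h3.2 A hA hAL hAD.2,
          ih h1.2 h2.2 h3.2 (insert u A) (Finset.insert_subset h1.1 hA)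
          (by rw [Finset.disjoint_insert_left]; exact ⟨h2.1, hAL⟩)
          (by rw [Finset.disjoint_insert_left]; exact ⟨hu, hAD.2⟩)]
    have hs := step ((Z \ L).erase w)
      ((Finset.erase_subset _ _).trans (Finset.sdiff_subset.trans hZN))
      (Finset.disjoint_of_subset_left (Finset.erase_subset _ _) Finset.sdiff_disjoint)
      (Finset.notMem_erase _ _) ∅ (Finset.empty_subset _) (Finset.disjoint_empty_left _)
      (Finset.disjoint_empty_left _)
    have e := gpar_insert f ((Z \ L).erase w ∪ L) ∅ w (by simp [hwL])
    rw [hs, sub_self] at e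
    rw [← e]
    congr 1
    ext v
    have a := @hLZ.1 v
    by_cases hv : v = w
    · subst hv; simp [hwZ]
    · simp only [Finset.mem_union, Finset.mem_sdiff, Finset.mem_insert, Finset.mem_erase]
      tauto
end

section
/- Let ∅ ≠ S ⊆ L ⊆ M ⊊ N ⊆ V. Then 𝔛_N is strictly collapsible over N∖M into 𝔛_M with respect to the set C_S = {λ_A^N : S ⊆ A ⊆ L}, meaning λ_A^M(x_A) = λ_A^N(x_A) for every A with S ⊆ A ⊆ L and every x_A, and λ_Z^N(x_Z) = 0 for every Z ⊆ N with S ⊊ Z and Z ∩ (N∖M) ≠ ∅ and every x_Z, if and only if both: (a) Σ_{R ⊆ S} (−1)^{|S∖R|} d̃_{L∖R}^{(M)}(x_{L∖R}) = 0 for every x_L ∈ 𝔛_L, and (b) Σ_{Z ⊆ S} (−1)^{|S∖Z|} ν_{(N∖S)∪Z}^N(x_{N∖S}, x_Z) = Σ_{Z ⊆ S} (−1)^{|S∖Z|} ν_{(M∖S)∪Z}^N(x_{M∖S}, x_Z) for every x_N ∈ 𝔛_N. -/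
open Finset

variable {V : Type*} [Fintype V] [DecidableEq V]
variable {𝔛 : V → Type*} [∀ v, Fintype (𝔛 v)] [∀ v, DecidableEq (𝔛 v)]
  [∀ v, Nonempty (𝔛 v)]

section Helpers

variable {W : Type*} [DecidableEq W] {R : Type*} [Ring R] [Algebra ℝ R]

theorem hlp_alt_up {A B : Finset W} (h : A ⊆ B) :
    ∑ C ∈ Finset.Icc A B, (-1 : ℝ) ^ ((C \ A).card) = if A = B then 1 else 0 := by
  have h1 : ∑ C ∈ Finset.Icc A B, (-1 : ℝ) ^ ((C \ A).card)
      = ∑ C ∈ (B \ A).powerset, (-1 : ℝ) ^ C.card := by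
    refine Finset.sum_bij' (fun C _ => C \ A) (fun C _ => A ∪ C) ?_ ?_ ?_ ?_ ?_
    · intro C hC; simp only [Finset.mem_Icc] at hC
      simp only [Finset.mem_powerset]; grind
    · intro C hC; simp only [Finset.mem_powerset] at hC
      simp only [Finset.mem_Icc]; grind
    · intro C hC; simp only [Finset.mem_Icc] at hC
      grind
    · intro C hC; simp only [Finset.mem_powerset] at hC
      grind
    · intro C hC; rfl
  rw [h1]
  have h2 := Finset.sum_powerset_neg_one_pow_card (x := B \ A)
  have h3 : ∑ C ∈ (B \ A).powerset, (-1 : ℝ) ^ C.card = if B \ A = ∅ then 1 else 0 := by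
    have := congrArg (fun z : ℤ => (z : ℝ)) h2
    push_cast at this
    exact this
  rw [h3]
  have : B \ A = ∅ ↔ A = B := by
    rw [Finset.sdiff_eq_empty_iff_subset]
    exact ⟨fun h' => h.antisymm h', fun h' => h' ▸ subset_rfl⟩
  simp only [this]

theorem hlp_alt_down {A B : Finset W} (h : A ⊆ B) :
    ∑ C ∈ Finset.Icc A B, (-1 : ℝ) ^ ((B \ C).card) = if A = B then 1 else 0 := by
  rw [← hlp_alt_up h]
  refine Finset.sum_bij' (fun C _ => A ∪ (B \ C)) (fun C _ => A ∪ (B \ C)) ?_ ?_ ?_ ?_ ?_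
  · intro C hC; simp only [Finset.mem_Icc] at *; grind
  · intro C hC; simp only [Finset.mem_Icc] at *; grind
  · intro C hC; simp only [Finset.mem_Icc] at *; grind
  · intro C hC; simp only [Finset.mem_Icc] at *; grind
  · intro C hC; simp only [Finset.mem_Icc] at hC
    congr 2
    grind

noncomputable def hlpP (E : Finset W → R) (A : Finset W) : R :=
  ∑ A' ∈ A.powerset, (-1 : ℝ) ^ ((A \ A').card) • E A'

theorem hlp_inv (E : Finset W → R) (B : Finset W) :
    E B = ∑ A ∈ B.powerset, hlpP E A := by
  unfold hlpP
  rw [Finset.sum_comm' (t' := B.powerset) (s' := fun A' => Finset.Icc A' B)]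
  · have : ∀ A' ∈ B.powerset, ∑ A ∈ Finset.Icc A' B, (-1 : ℝ) ^ ((A \ A').card) • E A'
        = if A' = B then E A' else 0 := by
      intro A' hA'
      rw [← Finset.sum_smul, hlp_alt_up (Finset.mem_powerset.1 hA')]
      split_ifs <;> simp
    rw [Finset.sum_congr rfl this]
    simp
  · intro x y
    simp only [Finset.mem_Icc, Finset.mem_powerset]
    exact ⟨fun h => ⟨⟨h.2, h.1⟩, h.2.trans h.1⟩, fun h => ⟨h.1.2, h.1.1⟩⟩

theorem hlp_EP (E : Finset W → R) (hE : ∀ A B, E A * E B = E (A ∩ B)) (A B : Finset W) :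
    E B * hlpP E A = if A ⊆ B then hlpP E A else 0 := by
  unfold hlpP
  rw [Finset.mul_sum]
  simp only [mul_smul_comm, hE]
  split_ifs with h
  · refine Finset.sum_congr rfl fun A' hA' => ?_
    rw [Finset.inter_eq_right.2 ((Finset.mem_powerset.1 hA').trans h)]
  · obtain ⟨a, haA, haB⟩ := Finset.not_subset.1 h
    obtain ⟨A0, ha0, rfl⟩ : ∃ A0, a ∉ A0 ∧ A = insert a A0 :=
      ⟨A.erase a, by simp, (Finset.insert_erase haA).symm⟩
    rw [Finset.sum_powerset_insert ha0, ← Finset.sum_add_distrib]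
    refine Finset.sum_eq_zero fun t ht => ?_
    have ht' := Finset.mem_powerset.1 ht
    have h1 : insert a A0 \ t = insert a (A0 \ t) := by grind
    have h2 : insert a A0 \ insert a t = A0 \ t := by grind
    have h3 : B ∩ insert a t = B ∩ t := by grind
    rw [h1, h2, h3, Finset.card_insert_of_notMem (by grind), pow_succ]
    simp

theorem hlp_comm (E : Finset W → R) (hE : ∀ A B, E A * E B = E (A ∩ B)) (A B : Finset W) :
    hlpP E A * E B = E B * hlpP E A := by
  unfold hlpP
  rw [Finset.mul_sum, Finset.sum_mul]
  simp only [mul_smul_comm, smul_mul_assoc, hE, Finset.inter_comm]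

theorem hlp_PP (E : Finset W → R) (hE : ∀ A B, E A * E B = E (A ∩ B)) (A B : Finset W) :
    hlpP E B * hlpP E A = if A = B then hlpP E A else 0 := by
  have key : hlpP E B * hlpP E A
      = ∑ B' ∈ B.powerset, ((-1 : ℝ) ^ ((B \ B').card) * if A ⊆ B' then 1 else 0) • hlpP E A := by
    conv_lhs => rw [hlpP, Finset.sum_mul]
    refine Finset.sum_congr rfl fun B' _ => ?_
    rw [smul_mul_assoc, hlp_EP E hE]
    split_ifs <;> simp
  rw [key, ← Finset.sum_smul]
  by_cases hAB : A ⊆ B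
  · have : ∑ B' ∈ B.powerset, ((-1 : ℝ) ^ ((B \ B').card) * if A ⊆ B' then 1 else 0)
        = ∑ B' ∈ Finset.Icc A B, (-1 : ℝ) ^ ((B \ B').card) := by
      simp only [mul_ite, mul_one, mul_zero]
      rw [← Finset.sum_filter]
      refine Finset.sum_congr ?_ fun _ _ => rfl
      ext C
      simp [and_comm]
    rw [this, hlp_alt_down hAB]
    split_ifs <;> simp
  · rw [Finset.sum_eq_zero, zero_smul, if_neg]
    · rintro rfl; exact hAB subset_rfl
    · intro B' hB'
      rw [if_neg, mul_zero]
      exact fun h => hAB (h.trans (Finset.mem_powerset.1 hB'))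

theorem hlp_Q (E : Finset W → R) {S N : Finset W} (hSN : S ⊆ N) :
    ∑ Z ∈ S.powerset, (-1 : ℝ) ^ ((S \ Z).card) • E ((N \ S) ∪ Z)
      = ∑ A ∈ Finset.Icc S N, hlpP E A := by
  have h1 : ∀ Z ∈ S.powerset, (-1 : ℝ) ^ ((S \ Z).card) • E ((N \ S) ∪ Z)
      = ∑ A ∈ ((N \ S) ∪ Z).powerset, (-1 : ℝ) ^ ((S \ Z).card) • hlpP E A := by
    intro Z _
    rw [← Finset.smul_sum, ← hlp_inv]
  rw [Finset.sum_congr rfl h1,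
    Finset.sum_comm' (t' := N.powerset) (s' := fun A => Finset.Icc (A ∩ S) S)]
  · have h2 : ∀ A ∈ N.powerset, ∑ Z ∈ Finset.Icc (A ∩ S) S, (-1 : ℝ) ^ ((S \ Z).card) • hlpP E A
        = if S ⊆ A then hlpP E A else 0 := by
      intro A _
      rw [← Finset.sum_smul, hlp_alt_down Finset.inter_subset_right]
      simp only [Finset.inter_eq_right]
      split_ifs <;> simp
    rw [Finset.sum_congr rfl h2, ← Finset.sum_filter]
    refine Finset.sum_congr ?_ fun _ _ => rfl
    ext C
    simp [and_comm]
  · intro Z A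
    simp only [Finset.mem_Icc, Finset.mem_powerset]
    constructor
    · rintro ⟨h, h'⟩
      refine ⟨⟨?_, h⟩, ?_⟩ <;> grind
    · rintro ⟨⟨h, h'⟩, h''⟩
      refine ⟨h', ?_⟩
      intro a ha
      by_cases haS : a ∈ S
      · exact Finset.mem_union_right _ (h (Finset.mem_inter.2 ⟨ha, haS⟩))
      · exact Finset.mem_union_left _ (Finset.mem_sdiff.2 ⟨h'' ha, haS⟩)

theorem hlp_Q2 (E : Finset W → R) {S N : Finset W} (hSN : S ⊆ N) :
    ∑ Z ∈ S.powerset, (-1 : ℝ) ^ ((S \ Z).card) • E (N \ Z)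
      = (-1 : ℝ) ^ S.card • ∑ A ∈ Finset.Icc S N, hlpP E A := by
  rw [← hlp_Q E hSN, Finset.smul_sum]
  refine Finset.sum_bij' (fun Z _ => S \ Z) (fun Z _ => S \ Z) ?_ ?_ ?_ ?_ ?_
  · intro Z hZ; simp
  · intro Z hZ; simp
  · intro Z hZ; simpa using hZ
  · intro Z hZ; simpa using hZ
  · intro Z hZ
    have hZ' := Finset.mem_powerset.1 hZ
    have h1 : N \ S ∪ S \ Z = N \ Z := by grind
    have h2 : S \ (S \ Z) = Z := by simpa using hZ'
    rw [h1, h2, smul_smul]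
    congr 1
    have h3 := Finset.card_sdiff_add_card_eq_card hZ'
    rw [← h3, pow_add, mul_assoc, ← mul_pow]
    simp

end Helpers

/-- Averaging over all coordinates outside `A`. -/
noncomputable def hlpE (A : Finset V) : Module.End ℝ ((∀ v, 𝔛 v) → ℝ) where
  toFun f x := (∏ v ∈ Aᶜ, (Fintype.card (𝔛 v) : ℝ))⁻¹ *
    ∑ j ∈ Finset.univ.filter (fun j : ∀ v, 𝔛 v => ∀ v ∈ A, j v = x v), f j
  map_add' f g := by
    funext x
    simp [Finset.sum_add_distrib, mul_add]
  map_smul' c f := by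
    funext x
    simp only [Pi.smul_apply, smul_eq_mul, ← Finset.mul_sum, RingHom.id_apply]
    ring

theorem hlp_count (A B : Finset V) (x k : ∀ v, 𝔛 v) :
    ((Finset.univ.filter (fun j : ∀ v, 𝔛 v =>
      (∀ v ∈ A, j v = x v) ∧ ∀ v ∈ B, k v = j v)).card : ℝ)
      = if ∀ v ∈ A ∩ B, k v = x v then ∏ v ∈ (A ∪ B)ᶜ, (Fintype.card (𝔛 v) : ℝ) else 0 := by
  split_ifs with h
  · have : Finset.univ.filter (fun j : ∀ v, 𝔛 v =>
        (∀ v ∈ A, j v = x v) ∧ ∀ v ∈ B, k v = j v)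
        = Fintype.piFinset (fun v => if v ∈ A then {x v} else if v ∈ B then {k v} else
          (Finset.univ : Finset (𝔛 v))) := by
      ext j
      simp only [Finset.mem_filter, Finset.mem_univ, true_and, Fintype.mem_piFinset]
      constructor
      · rintro ⟨h1, h2⟩ v
        split_ifs with hA hB
        · simpa using h1 v hA
        · simpa using (h2 v hB).symm
        · simp
      · intro hj
        refine ⟨fun v hv => ?_, fun v hv => ?_⟩
        · have := hj v
          simpa [hv] using this
        · have := hj v
          by_cases hA : v ∈ A
          · rw [if_pos hA] at this
            rw [Finset.mem_singleton.1 this]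
            exact h v (Finset.mem_inter.2 ⟨hA, hv⟩)
          · simp only [hA, hv, if_true, if_false, Finset.mem_singleton] at this
            exact this.symm
    rw [this, Fintype.card_piFinset, ← Finset.prod_mul_prod_compl (A ∪ B)]
    rw [Finset.prod_eq_one (s := A ∪ B), one_mul]
    · push_cast
      refine Finset.prod_congr rfl fun v hv => ?_
      simp only [Finset.mem_compl, Finset.mem_union, not_or] at hv
      simp [hv.1, hv.2]
    · intro v hv
      by_cases hA : v ∈ A
      · simp [hA]
      · have hB : v ∈ B := (Finset.mem_union.1 hv).resolve_left hA
        simp [hA, hB]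
  · rw [Finset.filter_eq_empty_iff.2]
    · simp
    · rintro j - ⟨h1, h2⟩
      exact h fun v hv => (h2 v (Finset.mem_inter.1 hv).2).trans (h1 v (Finset.mem_inter.1 hv).1)

theorem hlpE_mul (A B : Finset V) :
    (hlpE A * hlpE B : Module.End ℝ ((∀ v, 𝔛 v) → ℝ)) = hlpE (A ∩ B) := by
  refine LinearMap.ext fun f => ?_
  funext x
  have hpos : ∀ C : Finset V, ∏ v ∈ C, (Fintype.card (𝔛 v) : ℝ) ≠ 0 := fun C =>
    Finset.prod_ne_zero_iff.2 fun v _ => by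
      exact_mod_cast Fintype.card_ne_zero
  rw [Module.End.mul_apply]
  change (∏ v ∈ Aᶜ, (Fintype.card (𝔛 v) : ℝ))⁻¹ *
    ∑ j ∈ Finset.univ.filter (fun j : ∀ v, 𝔛 v => ∀ v ∈ A, j v = x v),
      ((∏ v ∈ Bᶜ, (Fintype.card (𝔛 v) : ℝ))⁻¹ *
        ∑ k ∈ Finset.univ.filter (fun k : ∀ v, 𝔛 v => ∀ v ∈ B, k v = j v), f k)
    = (∏ v ∈ (A ∩ B)ᶜ, (Fintype.card (𝔛 v) : ℝ))⁻¹ *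
      ∑ k ∈ Finset.univ.filter (fun k : ∀ v, 𝔛 v => ∀ v ∈ A ∩ B, k v = x v), f k
  rw [← Finset.mul_sum]
  have hs : ∑ j ∈ Finset.univ.filter (fun j : ∀ v, 𝔛 v => ∀ v ∈ A, j v = x v),
        ∑ k ∈ Finset.univ.filter (fun k : ∀ v, 𝔛 v => ∀ v ∈ B, k v = j v), f k
      = (∏ v ∈ (A ∪ B)ᶜ, (Fintype.card (𝔛 v) : ℝ)) *
        ∑ k ∈ Finset.univ.filter (fun k : ∀ v, 𝔛 v => ∀ v ∈ A ∩ B, k v = x v), f k := by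
    rw [Finset.sum_comm' (t' := Finset.univ) (s' := fun k => Finset.univ.filter
      (fun j : ∀ v, 𝔛 v => (∀ v ∈ A, j v = x v) ∧ ∀ v ∈ B, k v = j v))]
    · rw [Finset.mul_sum, Finset.sum_filter]
      refine Finset.sum_congr rfl fun k _ => ?_
      rw [Finset.sum_const, nsmul_eq_mul, hlp_count]
      split_ifs <;> simp
    · intro j k
      simp
  rw [hs]
  have hc : (∏ v ∈ Aᶜ, (Fintype.card (𝔛 v) : ℝ)) * ∏ v ∈ Bᶜ, (Fintype.card (𝔛 v) : ℝ)
      = (∏ v ∈ (A ∩ B)ᶜ, (Fintype.card (𝔛 v) : ℝ)) *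
        ∏ v ∈ (A ∪ B)ᶜ, (Fintype.card (𝔛 v) : ℝ) := by
    rw [Finset.compl_inter, Finset.compl_union, Finset.prod_union_inter]
  have h1 := hpos Aᶜ
  have h2 := hpos Bᶜ
  have h3 := hpos (A ∩ B)ᶜ
  field_simp
  rw [hc]
  ring

theorem hlp_sum_zero {W : Type*} [DecidableEq W] {F : Type*} [AddCommGroup F] [Module ℝ F]
    (E : Finset W → Module.End ℝ F)
    (hE : ∀ A B, E A * E B = E (A ∩ B)) (T : Finset (Finset W)) (f : F) :
    (∑ A ∈ T, hlpP E A) f = 0 ↔ ∀ A ∈ T, (hlpP E A) f = 0 := by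
  constructor
  · intro h A hA
    have h1 := congrArg (fun z => (hlpP E A : Module.End ℝ F) z) h
    rw [map_zero, ← Module.End.mul_apply, Finset.mul_sum] at h1
    simp only [hlp_PP E hE] at h1
    simpa [hA] using h1
  · intro h
    rw [LinearMap.sum_apply]
    exact Finset.sum_eq_zero h

theorem hlp_mll (p : (∀ v, 𝔛 v) → ℝ) (A M : Finset V) (x : ∀ v, 𝔛 v) :
    mll p A M x = (hlpP hlpE A) (fun j => Real.log (margin p M j)) x := by
  simp only [hlpP, LinearMap.sum_apply, Finset.sum_apply, LinearMap.smul_apply, Pi.smul_apply,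
    smul_eq_mul]
  rfl

theorem stmt10 (p : (∀ v, 𝔛 v) → ℝ) (hp : ∀ x, 0 < p x) (hsum : ∑ x, p x = 1)
    (S L M N : Finset V) (hS : S.Nonempty) (hSL : S ⊆ L) (hLM : L ⊆ M) (hMN : M ⊂ N) :
    ((∀ A : Finset V, S ⊆ A → A ⊆ L → ∀ x : ∀ v, 𝔛 v, mll p A M x = mll p A N x) ∧
     (∀ Z ⊆ N, S ⊂ Z → (Z ∩ (N \ M)).Nonempty → ∀ x : ∀ v, 𝔛 v, mll p Z N x = 0)) ↔
    ((∀ x : ∀ v, 𝔛 v,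
        ∑ R ∈ S.powerset, (-1 : ℝ) ^ ((S \ R).card) * dtilde p M N (L \ R) x = 0) ∧
     (∀ x : ∀ v, 𝔛 v,
        ∑ Z ∈ S.powerset, (-1 : ℝ) ^ ((S \ Z).card) * nu p ((N \ S) ∪ Z) N x =
        ∑ Z ∈ S.powerset, (-1 : ℝ) ^ ((S \ Z).card) * nu p ((M \ S) ∪ Z) N x)) := by

  have hE : ∀ A B : Finset V,
    (hlpE A * hlpE B : Module.End ℝ ((∀ v, 𝔛 v) → ℝ)) = hlpE (A ∩ B) := hlpE_mul
  have hSM := hSL.trans hLM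
  have hMN' := hMN.subset
  set gM : (∀ v, 𝔛 v) → ℝ := fun j => Real.log (margin p M j) with hgM
  set gN : (∀ v, 𝔛 v) → ℝ := fun j => Real.log (margin p N j) with hgN
  have hd : dd p M N = gM - hlpE M gN := rfl
  refine and_congr ?_ ?_
  · have h1 : (∀ x : ∀ v, 𝔛 v,
        ∑ R ∈ S.powerset, (-1 : ℝ) ^ ((S \ R).card) * dtilde p M N (L \ R) x = 0) ↔
        (∑ A ∈ Finset.Icc S L, hlpP hlpE A) (dd p M N) = 0 := by
      have h2 : ∀ x, ∑ R ∈ S.powerset, (-1 : ℝ) ^ ((S \ R).card) * dtilde p M N (L \ R) x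
          = (-1 : ℝ) ^ S.card * (∑ A ∈ Finset.Icc S L, hlpP hlpE A) (dd p M N) x := by
        intro x
        have := congrFun (LinearMap.congr_fun
          (hlp_Q2 (hlpE : Finset V → Module.End ℝ ((∀ v, 𝔛 v) → ℝ)) hSL) (dd p M N)) x
        rw [LinearMap.smul_apply, Pi.smul_apply, smul_eq_mul] at this
        rw [← this]
        simp only [LinearMap.sum_apply, Finset.sum_apply, LinearMap.smul_apply, Pi.smul_apply,
          smul_eq_mul]
        rfl
      simp only [h2, funext_iff, Pi.zero_apply]
      refine forall_congr' fun x => ?_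
      simp
    rw [h1, hlp_sum_zero hlpE hE]
    have h3 : ∀ A ⊆ L, (hlpP hlpE A) (dd p M N) = (hlpP hlpE A) gM - (hlpP hlpE A) gN := by
      intro A hA
      rw [hd, map_sub, ← Module.End.mul_apply, hlp_comm hlpE hE, hlp_EP hlpE hE,
        if_pos (hA.trans hLM)]
    constructor
    · intro h A hA
      obtain ⟨hA1, hA2⟩ := Finset.mem_Icc.1 hA
      rw [h3 A hA2, sub_eq_zero]
      funext x
      have := h A hA1 hA2 x
      rwa [hlp_mll, hlp_mll] at this
    · intro h A hA1 hA2 x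
      have := h A (Finset.mem_Icc.2 ⟨hA1, hA2⟩)
      rw [h3 A hA2, sub_eq_zero] at this
      rw [hlp_mll, hlp_mll]
      exact congrFun this x
  · have h1 : ∀ K : Finset V, S ⊆ K → ∀ x,
        ∑ Z ∈ S.powerset, (-1 : ℝ) ^ ((S \ Z).card) * nu p ((K \ S) ∪ Z) N x
          = (∑ A ∈ Finset.Icc S K, hlpP hlpE A) gN x := by
      intro K hK x
      rw [← hlp_Q _ hK]
      simp only [LinearMap.sum_apply, Finset.sum_apply, LinearMap.smul_apply, Pi.smul_apply,
        smul_eq_mul]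
      rfl
    have h2 : (∀ x : ∀ v, 𝔛 v,
        ∑ Z ∈ S.powerset, (-1 : ℝ) ^ ((S \ Z).card) * nu p ((N \ S) ∪ Z) N x =
        ∑ Z ∈ S.powerset, (-1 : ℝ) ^ ((S \ Z).card) * nu p ((M \ S) ∪ Z) N x) ↔
        (∑ A ∈ Finset.Icc S N \ Finset.Icc S M, hlpP hlpE A) gN = 0 := by
      simp only [h1 N (hSM.trans hMN'), h1 M hSM]
      rw [← Finset.sum_sdiff (Finset.Icc_subset_Icc_right hMN' :
        Finset.Icc S M ⊆ Finset.Icc S N)]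
      simp only [LinearMap.add_apply, Pi.add_apply, funext_iff, Pi.zero_apply, add_eq_right]
    rw [h2, hlp_sum_zero hlpE hE]
    constructor
    · intro h A hA
      simp only [Finset.mem_sdiff, Finset.mem_Icc, not_and] at hA
      have hAM := hA.2 hA.1.1
      obtain ⟨a, ha, haM⟩ := Finset.not_subset.1 hAM
      funext x
      have := h A hA.1.2 (Finset.ssubset_iff_subset_ne.2
        ⟨hA.1.1, fun e => hAM (e ▸ hSM)⟩)
        ⟨a, Finset.mem_inter.2 ⟨ha, Finset.mem_sdiff.2 ⟨hA.1.2 ha, haM⟩⟩⟩ x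
      rwa [hlp_mll] at this
    · intro h A hAN hSA hne x
      obtain ⟨a, ha⟩ := hne
      obtain ⟨haA, ha'⟩ := Finset.mem_inter.1 ha
      have := h A (by
        simp only [Finset.mem_sdiff, Finset.mem_Icc, not_and]
        exact ⟨⟨hSA.subset, hAN⟩, fun _ h' => (Finset.mem_sdiff.1 ha').2 (h' haA)⟩)
      rw [hlp_mll]
      exact congrFun this x
end
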